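/- arXiv:2006.07927 — 2 statements merged into one kernel-verified Lean document; each statement's English description precedes it below -/
import Mathlib

section
/- For every integer n ≥ 1: q_s(x_n) = q_KL if and only if n ∈ S ∪ {1}; moreover, if n ∈ S ∪ {1} then q_KL ∈ 𝒰(x_n), so the infimum defining q_s(x_n) is attained and q_KL = min 𝒰(x_n). In particular, there are infinitely many x > 0 with q_s(x) = min 𝒰(x) = q_KL. -/
/-!
Write `Q = q_KL`, so that `V Q (T 1) = 1` and `x_n = V Q (T n)`, where `T n = τ_n τ_{n+1} …` and
`V q d` is the value of the digit sequence `d` in base `q`. A sequence `d` is the unique expansion of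
its value iff after each `0` the remaining tail, and after each `1` the reflection of the remaining
tail, has value `< 1` (`existsUnique_iff`). Among unique expansions the lexicographic order is the
order of the values (`V_lt_of_Lt`). Every proper tail of the Thue–Morse sequence, and its reflection,
is smaller than `T 1`; hence `T n` is a unique expansion in base `Q` by Parry's argument (`UU_T`).
The decisive fact is that in any base a unique expansion smaller than `T 1` has value `< 1`
(`V_lt_one_of_Lt`).

*Indices in `S ∪ {1}`.* Let `d` be a unique expansion of `x_n` in a base `q < Q`. Since `x_n` is
less than the value of `T n` in base `q`, `d` is smaller than `T n`. For `n = 1` this contradicts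
`V_lt_one_of_Lt`. Otherwise let `N` be the first power of two `≥ n`. If `d` departs from `T n` only
after the digit `τ_N`, then `τ_1 … τ_{n-1} d` is again a unique expansion (`UU_G`), so its value is
`< 1`; solving for the tail gives `V q d < PP (n - 1) q < PP (n - 1) Q = x_n` with the increasing
polynomials `PP`. If `d` departs from `T n` at or before `τ_N`, then `V q d` is less than the value
`cc Q n N < x_n` of `τ_n … τ_N` followed by the reflected Thue–Morse sequence. This is the property
`HB`, proved along the recursion for `S`: it is checked directly for `2, 3, 4`, and it passes from
`r` to `n = 3N' + r` with `N' = 2^(k-1) ≥ r`, since `τ_n … τ_{4N'}` and `τ_r … τ_{N'}` are the same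
word. The passage needs `HB` for `r` with respect to the possibly larger power `N'` (`HB.extend`),
where the polynomials are compared at the base `q_l` in which `τ_1 … τ_{N'} 0 0 …` has value `1`.

*Other indices.* The sequence `al N = (τ_1 … τ_{N-1} 0)^∞` has value `1` at `q_l` and is a unique
expansion in all bases greater than `q_l`. For `2N < n = 2N + r ≤ 3N`, the reflection of
`τ_r … τ_N` followed by `al N` is a unique expansion in all bases of `(q_l, Q)`; its value exceeds
`x_n` at `q_l` (`Wit_base`) and is below `x_n` at `Q`. By the intermediate value theorem some base
below `Q` lies in `𝒰(x_n)`. For `n = 3N + r` with `r = 1` or `r ∉ S`, the sequence found for `r`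
serves for `n` too, because `x_n < x_r` (`Wit.step`, `V_T_three_lt`).

Finally `2 · 4 ^ i ∈ S` for all `i`, and the corresponding `x_n` are strictly decreasing.
-/

open Filter Set

noncomputable section

/-- `d` is a `q`-expansion of `x`: all digits lie in `{0,1}` and
`x = ∑_{i=1}^∞ d_i q^{-i}`.  Here `d i` stands for the digit `d_{i+1}`. -/
def IsExpansion (q x : ℝ) (d : ℕ → ℕ) : Prop :=
  (∀ i, d i ≤ 1) ∧ x = ∑' i : ℕ, (d i : ℝ) / q ^ (i + 1)

/-- `𝒰(x)`: the set of bases `q ∈ (1,2]` in which `x` has a unique expansion. -/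
def UnivSet (x : ℝ) : Set ℝ :=
  {q | q ∈ Set.Ioc (1 : ℝ) 2 ∧ ∃! d : ℕ → ℕ, IsExpansion q x d}

/-- `q_s(x) = inf 𝒰(x)`. -/
def qs (x : ℝ) : ℝ := sInf (UnivSet x)

/-- The level set `L(q) = {x > 0 : q_s(x) = q}`. -/
def levelSet (q : ℝ) : Set ℝ := {x | 0 < x ∧ qs x = q}

/-- The golden ratio `q_G = (1+√5)/2`. -/
def qG : ℝ := (1 + Real.sqrt 5) / 2

/-- The Thue–Morse sequence: `tm i = s_i mod 2`, where `s_i` is the number of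
`1`s in the binary representation of `i`. -/
def tm (i : ℕ) : ℕ := (Nat.digits 2 i).sum % 2

/-- The set `S ⊆ ℕ`: `2, 3, 4 ∈ S`, and for `k ≥ 2` and `2^k < n ≤ 2^{k+1}`,
`n ∈ S` iff `n > 3·2^{k-1}` and `n - 3·2^{k-1} ∈ S`; no other elements. -/
inductive memS : ℕ → Prop
  | two : memS 2
  | three : memS 3
  | four : memS 4
  | step (k n : ℕ) (hk : 2 ≤ k) (h1 : 2 ^ k < n) (h2 : n ≤ 2 ^ (k + 1))
      (h3 : 3 * 2 ^ (k - 1) < n) (h : memS (n - 3 * 2 ^ (k - 1))) : memS n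

namespace UExp

/-! ### Values of digit sequences and the lexicographic order -/

/-- The value `∑ d_i q^{-(i+1)}` of the digit sequence `d` in base `q`. -/
def V (q : ℝ) (d : ℕ → ℕ) : ℝ := ∑' i : ℕ, (d i : ℝ) / q ^ (i + 1)

/-- The shifted sequence `d_k d_{k+1} …`. -/
def sh (k : ℕ) (d : ℕ → ℕ) : ℕ → ℕ := fun i => d (k + i)

/-- `d` is a sequence of digits in `{0,1}`. -/
def Dig (d : ℕ → ℕ) : Prop := ∀ i, d i ≤ 1

/-- The reflection of a `0`-`1` sequence: zeros and ones are exchanged. -/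
def cmp (d : ℕ → ℕ) : ℕ → ℕ := fun i => 1 - d i

/-- The sequence with first digit `b` followed by `d`. -/
def cons (b : ℕ) (d : ℕ → ℕ) : ℕ → ℕ := fun i => if i = 0 then b else d (i - 1)

/-- `d` is lexicographically smaller than `e`, the first difference being at index `p`. -/
def LtAt (p : ℕ) (d e : ℕ → ℕ) : Prop := (∀ i < p, d i = e i) ∧ d p < e p

/-- Strict lexicographic order on sequences. -/
def Lt (d e : ℕ → ℕ) : Prop := ∃ p, LtAt p d e

/-- `d` is the unique expansion, in base `q`, of its value; the definition is the classical
criterion that no digit of `d` can be changed: after a `0` the remaining value is `< 1`, and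
after a `1` the same holds for the reflected sequence. See `existsUnique_iff`. -/
def UU (q : ℝ) (d : ℕ → ℕ) : Prop :=
  Dig d ∧ ∀ i, (d i = 0 → V q (sh (i + 1) d) < 1) ∧ (d i = 1 → V q (cmp (sh (i + 1) d)) < 1)

lemma Dig.sh {d : ℕ → ℕ} (h : Dig d) (k : ℕ) : Dig (sh k d) := fun _ => h _
lemma Dig.cmp (d : ℕ → ℕ) : Dig (cmp d) := fun _ => Nat.sub_le _ _
lemma sh_sh (a b : ℕ) (d : ℕ → ℕ) : sh a (sh b d) = sh (b + a) d := by
  funext i; simp [sh, add_assoc]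
lemma sh_zero (d : ℕ → ℕ) : sh 0 d = d := by funext i; simp [sh]
lemma cmp_sh (k : ℕ) (d : ℕ → ℕ) : cmp (sh k d) = sh k (cmp d) := rfl
lemma cmp_cmp {d : ℕ → ℕ} (h : Dig d) : cmp (cmp d) = d := by
  funext i; have := h i; simp only [cmp]; omega
lemma Dig.cons {b : ℕ} (hb : b ≤ 1) {d : ℕ → ℕ} (h : Dig d) : Dig (cons b d) := by
  intro i; simp only [UExp.cons]; split_ifs <;> [exact hb; exact h _]
lemma sh_cons (b : ℕ) (d : ℕ → ℕ) : sh 1 (cons b d) = d := by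
  funext i
  simp only [sh, cons]
  rw [if_neg (by omega)]
  congr 1; omega

lemma summable_geo {q : ℝ} (hq : 1 < q) : Summable (fun i : ℕ => 1 / q ^ (i + 1)) := by
  have := (summable_geometric_of_lt_one (r := 1 / q) (by positivity)
    (by rw [div_lt_one (by linarith)]; exact hq)).mul_left (1 / q)
  refine this.congr fun i => ?_
  rw [one_div_pow, pow_succ]; field_simp

lemma V_summable {q : ℝ} (hq : 1 < q) {d : ℕ → ℕ} (hd : Dig d) :
    Summable (fun i : ℕ => (d i : ℝ) / q ^ (i + 1)) := by
  have hq0 : 0 < q := by linarith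
  refine Summable.of_nonneg_of_le (fun _ => by positivity) (fun i => ?_) (summable_geo hq)
  have : (d i : ℝ) ≤ 1 := by exact_mod_cast hd i
  gcongr

lemma V_ones {q : ℝ} (hq : 1 < q) : V q (fun _ => 1) = 1 / (q - 1) := by
  have hq0 : 0 < q := by linarith
  have h := (hasSum_geometric_of_lt_one (r := 1 / q) (by positivity)
    (by rw [div_lt_one (by linarith)]; exact hq)).mul_left (1 / q)
  unfold V
  have e : (fun i : ℕ => ((1 : ℕ) : ℝ) / q ^ (i + 1)) = fun i => 1 / q * (1 / q) ^ i := by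
    funext i; rw [one_div_pow, pow_succ]; push_cast; field_simp
  rw [e, h.tsum_eq]
  have : q - 1 ≠ 0 := by linarith
  have : 1 - 1 / q ≠ 0 := by rw [sub_ne_zero, ne_eq, eq_comm, div_eq_one_iff_eq (by linarith)]; linarith
  field_simp

lemma V_nonneg {q : ℝ} (hq : 1 < q) (d : ℕ → ℕ) : 0 ≤ V q d :=
  tsum_nonneg fun _ => by have : 0 < q := by linarith
                          positivity

lemma V_cmp {q : ℝ} (hq : 1 < q) {d : ℕ → ℕ} (hd : Dig d) : V q (cmp d) = 1 / (q - 1) - V q d := by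
  rw [← V_ones hq, eq_sub_iff_add_eq]
  unfold V
  rw [← (V_summable hq (Dig.cmp d)).tsum_add (V_summable hq hd)]
  congr 1; funext i
  have := hd i
  rw [← add_div]; congr 1
  simp only [cmp]; norm_cast; omega

lemma V_le {q : ℝ} (hq : 1 < q) {d : ℕ → ℕ} (hd : Dig d) : V q d ≤ 1 / (q - 1) := by
  have := V_cmp hq hd; have := V_nonneg hq (cmp d); linarith

lemma V_head {q : ℝ} (hq : 1 < q) {d : ℕ → ℕ} (hd : Dig d) :
    V q d = (d 0 + V q (sh 1 d)) / q := by
  unfold V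
  rw [(V_summable hq hd).tsum_eq_zero_add, add_div, ← tsum_div_const]
  congr 1
  · simp
  · congr 1; funext i
    have : q ≠ 0 := by linarith
    simp only [sh, add_comm 1 i]; field_simp; ring

lemma V_tail {q : ℝ} (hq : 1 < q) {d : ℕ → ℕ} (hd : Dig d) (k : ℕ) :
    V q (sh (k + 1) d) = q * V q (sh k d) - d k := by
  have := V_head hq (hd.sh k)
  rw [sh_sh] at this
  have hq0 : q ≠ 0 := by linarith
  rw [this]; simp only [sh, add_zero]; field_simp; ring

lemma V_cons {q : ℝ} (hq : 1 < q) {b : ℕ} (hb : b ≤ 1) {d : ℕ → ℕ} (hd : Dig d) :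
    V q (cons b d) = (b + V q d) / q := by
  rw [V_head hq (hd.cons hb), sh_cons]; simp [cons]

/-- The partial sum of the first `k` digits. -/
def S (q : ℝ) (k : ℕ) (d : ℕ → ℕ) : ℝ := ∑ i ∈ Finset.range k, (d i : ℝ) / q ^ (i + 1)

lemma V_split {q : ℝ} (hq : 1 < q) {d : ℕ → ℕ} (hd : Dig d) (k : ℕ) :
    V q d = S q k d + V q (sh k d) / q ^ k := by
  unfold V S
  rw [← (V_summable hq hd).sum_add_tsum_nat_add k, ← tsum_div_const]
  congr 1; congr 1; funext i
  have : q ≠ 0 := by linarith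
  simp only [sh, add_comm k i]
  rw [div_div, ← pow_add]; congr 2; ring

lemma S_congr {q : ℝ} {k : ℕ} {d e : ℕ → ℕ} (h : ∀ i < k, d i = e i) : S q k d = S q k e :=
  Finset.sum_congr rfl fun i hi => by rw [h i (Finset.mem_range.1 hi)]

lemma V_mono {q q' : ℝ} (hq : 1 < q) (h : q ≤ q') {d : ℕ → ℕ} (hd : Dig d) :
    V q' d ≤ q / q' * V q d := by
  unfold V
  rw [← tsum_mul_left]
  refine (V_summable (hq.trans_le h) hd).tsum_le_tsum (fun i => ?_) ((V_summable hq hd).mul_left _)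
  have hq0 : 0 < q := by linarith
  have hq1 : 0 < q' := by linarith
  have h1 : q ^ i ≤ q' ^ i := by gcongr
  have e1 : q / q' * ((d i : ℝ) / q ^ (i + 1)) = d i / (q' * q ^ i) := by
    rw [pow_succ]; field_simp
  rw [e1, pow_succ, mul_comm (q' ^ i)]
  gcongr

lemma V_anti {q q' : ℝ} (hq : 1 < q) (h : q ≤ q') {d : ℕ → ℕ} (hd : Dig d) : V q' d ≤ V q d := by
  refine (V_mono hq h hd).trans ?_
  have : q / q' ≤ 1 := by rw [div_le_one (by linarith)]; exact h
  exact mul_le_of_le_one_left (V_nonneg hq d) this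

lemma V_lt_one {q q' : ℝ} (hq : 1 < q) (h : q < q') {d : ℕ → ℕ} (hd : Dig d) (h1 : V q d ≤ 1) :
    V q' d < 1 := by
  have h2 := V_mono hq h.le hd
  have : q / q' < 1 := by rw [div_lt_one (by linarith)]; exact h
  have h0 := V_nonneg hq d
  have : 0 < q / q' := by have : 0 < q := by linarith
                          have : 0 < q' := by linarith
                          positivity
  nlinarith

lemma V_strict {q q' : ℝ} (hq : 1 < q) (h : q < q') {d : ℕ → ℕ} (hd : Dig d) (h1 : 0 < V q' d) :
    V q' d < V q d := by
  have h2 := V_mono hq h.le hd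
  have h3 : q / q' < 1 := by rw [div_lt_one (by linarith)]; exact h
  have h0 := V_anti hq h.le hd
  nlinarith

lemma V_cont {q q' : ℝ} (hq : 1 < q) {d : ℕ → ℕ} (hd : Dig d) :
    ContinuousOn (fun x => V x d) (Set.Icc q q') := by
  unfold V
  refine continuousOn_tsum (u := fun i : ℕ => 1 / q ^ (i + 1)) (fun i => ?_) (summable_geo hq) ?_
  · refine ContinuousOn.div continuousOn_const (by fun_prop) fun x hx => ?_
    have : 0 < x := by linarith [hx.1]
    positivity
  · intro i x hx
    have h0 : 0 < q := by linarith
    have hx0 : 0 < x := by linarith [hx.1]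
    rw [Real.norm_of_nonneg (by positivity)]
    have : (d i : ℝ) ≤ 1 := by exact_mod_cast hd i
    have := hx.1
    gcongr

lemma UU.sh {q : ℝ} {d : ℕ → ℕ} (h : UU q d) (k : ℕ) : UU q (sh k d) := by
  refine ⟨h.1.sh k, fun i => ?_⟩
  have := h.2 (k + i)
  rw [sh_sh]; exact this

lemma UU.cmp {q : ℝ} {d : ℕ → ℕ} (h : UU q d) : UU q (cmp d) := by
  refine ⟨Dig.cmp d, fun i => ⟨fun hi => ?_, fun hi => ?_⟩⟩
  · rw [← cmp_sh]; exact (h.2 i).2 (by have := h.1 i; simp only [UExp.cmp] at hi; omega)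
  · rw [← cmp_sh, cmp_cmp (h.1.sh _)]
    exact (h.2 i).1 (by have := h.1 i; simp only [UExp.cmp] at hi; omega)

lemma UU.cons {q : ℝ} {b : ℕ} {d : ℕ → ℕ} (h : UU q d) (hb : b ≤ 1) (h0 : b = 0 → V q d < 1)
    (h1 : b = 1 → V q (UExp.cmp d) < 1) : UU q (cons b d) := by
  refine ⟨h.1.cons hb, fun i => ?_⟩
  rcases i with _ | i
  · rw [zero_add, sh_cons]; exact ⟨h0, h1⟩
  · have := h.2 i
    rw [add_comm (i + 1) 1, ← sh_sh, sh_cons]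
    simpa [UExp.cons] using this

lemma LtAt.sh {p : ℕ} {d e : ℕ → ℕ} (h : LtAt (p + 1) d e) : LtAt p (sh 1 d) (sh 1 e) := by
  refine ⟨fun i hi => h.1 _ (by omega), ?_⟩
  have := h.2; rwa [add_comm] at this

lemma LtAt.cmp {p : ℕ} {d e : ℕ → ℕ} (he : Dig e) (h : LtAt p d e) :
    LtAt p (cmp e) (cmp d) := by
  refine ⟨fun i hi => by simp [UExp.cmp, h.1 i hi], ?_⟩
  have := h.2; have := he p
  simp only [UExp.cmp]; omega

/-- A unique expansion is compared with any other sequence as its value is. -/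
lemma V_lt_of_LtAt {q : ℝ} (hq : 1 < q) {p : ℕ} {d e : ℕ → ℕ} (he : Dig e) (hU : UU q d)
    (h : LtAt p d e) : V q d < V q e := by
  have hq0 : 0 < q := by linarith
  induction p generalizing d e with
  | zero =>
    have h1 := h.2; have h2 := he 0
    have d0 : d 0 = 0 := by omega
    have e0 : e 0 = 1 := by omega
    rw [V_head hq hU.1, V_head hq he, d0, e0]
    have := (hU.2 0).1 d0
    have := V_nonneg hq (UExp.sh 1 e)
    push_cast
    gcongr ?_ / _
    rw [zero_add] at *
    linarith
  | succ p ih =>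
    rw [V_head hq hU.1, V_head hq he, h.1 0 (by omega)]
    have := ih (he.sh 1) (hU.sh 1) h.sh
    gcongr

lemma V_lt_of_Lt {q : ℝ} (hq : 1 < q) {d e : ℕ → ℕ} (he : Dig e) (hU : UU q d)
    (h : Lt d e) : V q d < V q e := h.elim fun _ hp => V_lt_of_LtAt hq he hU hp

lemma V_gt_of_Lt {q : ℝ} (hq : 1 < q) {d e : ℕ → ℕ} (he : Dig e) (hU : UU q d)
    (h : Lt e d) : V q e < V q d := by
  obtain ⟨p, hp⟩ := h
  have := V_lt_of_LtAt hq (Dig.cmp e) hU.cmp (hp.cmp hU.1)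
  rw [V_cmp hq hU.1, V_cmp hq he] at this
  linarith

lemma Lt_trichotomy (d e : ℕ → ℕ) : Lt d e ∨ d = e ∨ Lt e d := by
  by_cases h : d = e
  · exact Or.inr (Or.inl h)
  have hex : ∃ i, d i ≠ e i := Function.ne_iff.1 h
  classical
  have h1 := Nat.find_spec hex
  have h2 : ∀ i < Nat.find hex, d i = e i := fun i hi => not_not.1 (Nat.find_min hex hi)
  rcases lt_or_gt_of_ne h1 with h3 | h3
  · exact Or.inl ⟨_, h2, h3⟩
  · exact Or.inr (Or.inr ⟨_, fun i hi => (h2 i hi).symm, h3⟩)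

lemma Lt_of_V_lt {q : ℝ} (hq : 1 < q) {d e : ℕ → ℕ} (he : Dig e) (hU : UU q d)
    (h : V q d < V q e) : Lt d e := by
  rcases Lt_trichotomy d e with h1 | h1 | h1
  · exact h1
  · subst h1; exact absurd h (lt_irrefl _)
  · exact absurd (V_gt_of_Lt hq he hU h1) (not_lt.2 h.le)

/-! ### Unique expansions -/

/-- The remainders of the greedy algorithm started at `x`. -/
def gr (q x : ℝ) : ℕ → ℝ
  | 0 => x
  | n + 1 => q * gr q x n - (if 1 ≤ q * gr q x n then 1 else 0)

lemma exists_expansion {q : ℝ} (hq : 1 < q) (hq2 : q ≤ 2) {x : ℝ} (h0 : 0 ≤ x)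
    (h1 : x ≤ 1 / (q - 1)) : ∃ d, Dig d ∧ V q d = x := by
  have hq1 : 0 < q - 1 := by linarith
  have hb : ∀ n, 0 ≤ gr q x n ∧ gr q x n ≤ 1 / (q - 1) := by
    intro n
    induction n with
    | zero => exact ⟨h0, h1⟩
    | succ n ih =>
      have h3 : q * gr q x n ≤ 1 / (q - 1) + 1 := by
        have : q * gr q x n ≤ q * (1 / (q - 1)) := by gcongr; exact ih.2
        have e : q * (1 / (q - 1)) = 1 / (q - 1) + 1 := by field_simp; ring
        linarith
      have h4 : 1 ≤ 1 / (q - 1) := by rw [le_div_iff₀ hq1]; linarith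
      have h5 : 0 ≤ q * gr q x n := mul_nonneg (by linarith) ih.1
      simp only [gr]
      split_ifs with h
      · constructor <;> linarith
      · constructor <;> linarith
  let d : ℕ → ℕ := fun n => if 1 ≤ q * gr q x n then 1 else 0
  have hd : Dig d := fun i => by simp only [d]; split_ifs <;> norm_num
  refine ⟨d, hd, ?_⟩
  have key : ∀ n, x - V q d = (gr q x n - V q (sh n d)) / q ^ n := by
    intro n
    induction n with
    | zero => simp [gr, sh_zero]
    | succ n ih =>
      rw [ih, V_tail hq hd]
      have : (gr q x (n + 1) : ℝ) = q * gr q x n - d n := by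
        simp only [gr, d]; push_cast; rfl
      rw [this, pow_succ]
      have : q ≠ 0 := by linarith
      field_simp; ring
  have hlim : Tendsto (fun n : ℕ => (1 / (q - 1)) * (1 / q) ^ n) atTop (nhds (1 / (q - 1) * 0)) :=
    (tendsto_pow_atTop_nhds_zero_of_lt_one (by positivity)
      (by rw [div_lt_one (by linarith)]; exact hq)).const_mul _
  rw [mul_zero] at hlim
  have : |x - V q d| ≤ 0 := by
    refine ge_of_tendsto' hlim fun n => ?_
    rw [key n, abs_div, abs_of_pos (by positivity : (0 : ℝ) < q ^ n), one_div_pow, mul_one_div]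
    have hv0 := V_nonneg hq (sh n d)
    have hv1 := V_le hq (hd.sh n)
    gcongr
    rw [abs_le]; constructor <;> linarith [(hb n).1, (hb n).2]
  have := abs_nonpos_iff.1 this
  linarith

/-- If the expansion of `V q d` is unique and starts with `0`, then the rest has value `< 1`:
otherwise the first digit could be replaced by `1` and the rest expanded anew. -/
lemma head_lt_one {q : ℝ} (hq : 1 < q) (hq2 : q ≤ 2) {d : ℕ → ℕ} (hd : Dig d)
    (h : ∀ e, Dig e → V q e = V q d → e = d) (h0 : d 0 = 0) : V q (sh 1 d) < 1 := by
  by_contra hcon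
  push Not at hcon
  have h1 := V_le hq (hd.sh 1)
  obtain ⟨e, he, hv⟩ := exists_expansion hq hq2 (x := V q (sh 1 d) - 1) (by linarith) (by linarith)
  have := h (cons 1 e) (he.cons le_rfl) (by
    rw [V_cons hq le_rfl he, hv, V_head hq hd, h0]; push_cast; ring)
  have := congrFun this 0
  simp [cons, h0] at this

lemma V_append {q : ℝ} (hq : 1 < q) {d e : ℕ → ℕ} (hd : Dig d) (he : Dig e) (k : ℕ)
    (h : V q e = V q (sh k d)) :
    V q (fun i => if i < k then d i else e (i - k)) = V q d := by
  have hg : Dig (fun i => if i < k then d i else e (i - k)) := fun i => by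
    dsimp only; split_ifs; exacts [hd _, he _]
  rw [V_split hq hg k, V_split hq hd k, ← h]
  congr 1
  · exact S_congr fun i hi => by simp [hi]
  · congr 2; funext i; simp [sh]

/-- The numbers with a unique expansion in base `q` are the values of the sequences in `UU q`. -/
lemma existsUnique_iff {q : ℝ} (hq : 1 < q) (hq2 : q ≤ 2) (x : ℝ) :
    (∃! d, IsExpansion q x d) ↔ ∃ d, UU q d ∧ V q d = x := by
  constructor
  · rintro ⟨d, ⟨hd, hx⟩, huniq⟩
    have hx' : V q d = x := hx.symm
    have hall : ∀ k e, Dig e → V q e = V q (sh k d) → e = sh k d := by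
      intro k e he hv
      have hap := V_append hq hd he k hv
      have := huniq (fun i => if i < k then d i else e (i - k))
        ⟨fun i => by dsimp only; split_ifs; exacts [hd _, he _], (hap.trans hx').symm⟩
      funext i
      have := congrFun this (k + i)
      simpa [sh] using this
    refine ⟨d, ⟨hd, fun k => ⟨fun hk => ?_, fun hk => ?_⟩⟩, hx'⟩
    · have := head_lt_one hq hq2 (Dig.sh hd k) (hall k) hk
      rwa [sh_sh] at this
    · have := head_lt_one hq hq2 (Dig.cmp (sh k d)) (fun e he hv => ?_) (by simp [cmp, sh, hk])
      · rwa [← cmp_sh, sh_sh] at this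
      · rw [V_cmp hq (Dig.sh hd k)] at hv
        rw [← cmp_cmp he, hall k (cmp e) (Dig.cmp e) (by rw [V_cmp hq he, hv]; ring)]
  · rintro ⟨d, hU, rfl⟩
    refine ⟨d, ⟨hU.1, rfl⟩, fun e ⟨he, hv⟩ => ?_⟩
    have hv' : V q d = V q e := hv
    rcases Lt_trichotomy d e with h | h | h
    · exact absurd (V_lt_of_Lt hq he hU h) (by rw [hv']; exact lt_irrefl _)
    · exact h.symm
    · exact absurd (V_gt_of_Lt hq he hU h) (by rw [hv']; exact lt_irrefl _)

/-! ### Comparison with a quasi-greedy sequence -/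

/-- Parry's comparison argument: suppose `α` has value at most `1`, and every member of a family
`F` of sequences either is `α` or is lexicographically smaller than `α` with the remaining tail
again in `F`. Then all values of `F` are at most `1`. -/
lemma parry {q : ℝ} (hq : 1 < q) {α : ℕ → ℕ} (hα : Dig α) (h1 : V q α ≤ 1)
    (F : (ℕ → ℕ) → Prop) (hF : ∀ c, F c → Dig c ∧ (c = α ∨ ∃ p, LtAt p c α ∧ F (sh (p + 1) c)))
    {c : ℕ → ℕ} (hc : F c) : V q c ≤ 1 := by
  have hq0 : 0 < q := by linarith
  have step : ∀ n : ℕ, ∀ c, F c → V q c - 1 ≤ (1 / (q - 1)) * (1 / q) ^ n := by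
    intro n
    induction n with
    | zero =>
      intro c hc
      have := V_le hq (hF c hc).1
      simp only [pow_zero, mul_one]; linarith
    | succ n ih =>
      intro c hc
      have hB : 0 ≤ (1 / (q - 1)) * (1 / q) ^ n := by
        have : 0 < q - 1 := by linarith
        positivity
      have hB' : 0 ≤ (1 / (q - 1)) * (1 / q) ^ (n + 1) := by
        have : 0 < q - 1 := by linarith
        positivity
      obtain ⟨hd, rfl | ⟨p, hp, hF'⟩⟩ := hF c hc
      · linarith
      · have e1 := V_split hq hd (p + 1)
        have e2 := V_split hq hα (p + 1)
        have hp2 := hp.2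
        have hαp := hα p
        have c0 : c p = 0 := by omega
        have a1 : α p = 1 := by omega
        have e3 : S q (p + 1) c + 1 / q ^ (p + 1) = S q (p + 1) α := by
          unfold S
          rw [Finset.sum_range_succ, Finset.sum_range_succ, c0, a1]
          have := S_congr (q := q) hp.1
          unfold S at this
          rw [this]; push_cast; ring
        have e4 := V_nonneg hq (sh (p + 1) α)
        have e5 : 0 ≤ V q (sh (p + 1) α) / q ^ (p + 1) := by positivity
        have e6 : V q c - 1 ≤ (V q (sh (p + 1) c) - 1) / q ^ (p + 1) := by
          rw [sub_div]; linarith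
        refine e6.trans ?_
        have e7 := ih _ hF'
        rw [pow_succ (1 / q), ← mul_assoc, mul_one_div]
        have hp1 : q ≤ q ^ (p + 1) := by
          rw [pow_succ]; nlinarith [one_le_pow₀ hq.le (n := p)]
        calc _ ≤ (1 / (q - 1)) * (1 / q) ^ n / q ^ (p + 1) := by gcongr
          _ ≤ _ := by gcongr
  have hlim : Tendsto (fun n : ℕ => (1 / (q - 1)) * (1 / q) ^ n) atTop (nhds (1 / (q - 1) * 0)) :=
    (tendsto_pow_atTop_nhds_zero_of_lt_one (by positivity)
      (by rw [div_lt_one (by linarith)]; exact hq)).const_mul _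
  rw [mul_zero] at hlim
  have := ge_of_tendsto' hlim fun n => step n c hc
  linarith

/-- If `c` is smaller than `α` and its tail beyond the first difference has value at most `1`, then
`V q c < 1`, provided that the corresponding tail of `α` has positive value. -/
lemma lt_one_of_LtAt {q : ℝ} (hq : 1 < q) {α c : ℕ → ℕ} (hα : Dig α) (hc : Dig c)
    (h1 : V q α ≤ 1) {p : ℕ} (hp : LtAt p c α) (ht : V q (sh (p + 1) c) ≤ 1)
    (hpos : 0 < V q (sh (p + 1) α)) : V q c < 1 := by
  have hq0 : 0 < q := by linarith
  have e1 := V_split hq hc (p + 1)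
  have e2 := V_split hq hα (p + 1)
  have hp2 := hp.2
  have hαp := hα p
  have c0 : c p = 0 := by omega
  have a1 : α p = 1 := by omega
  have e3 : S q (p + 1) c + 1 / q ^ (p + 1) = S q (p + 1) α := by
    unfold S
    rw [Finset.sum_range_succ, Finset.sum_range_succ, c0, a1]
    have := S_congr (q := q) hp.1
    unfold S at this
    rw [this]; push_cast; ring
  have e5 : 0 < V q (sh (p + 1) α) / q ^ (p + 1) := by positivity
  have e6 : V q (sh (p + 1) c) / q ^ (p + 1) ≤ 1 / q ^ (p + 1) := by gcongr
  linarith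

/-! ### The Thue–Morse sequence -/

lemma tm_le (i : ℕ) : tm i ≤ 1 := by unfold tm; omega
lemma tm_double (i : ℕ) : tm (2 * i) = tm i := by
  rcases Nat.eq_zero_or_pos i with rfl | h
  · rfl
  · unfold tm; rw [Nat.digits_def' (by norm_num) (by omega)]
    simp
lemma tm_double1 (i : ℕ) : tm (2 * i + 1) = 1 - tm i := by
  unfold tm; rw [Nat.digits_def' (by norm_num) (by omega)]
  have e1 : (2 * i + 1) % 2 = 1 := by omega
  have e2 : (2 * i + 1) / 2 = i := by omega
  rw [e1, e2, List.sum_cons]; omega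
lemma tm_zero : tm 0 = 0 := by simp [tm]
lemma tm_one : tm 1 = 1 := by simp [tm]
lemma tm_pow_add (j i : ℕ) (h : i < 2 ^ j) : tm (2 ^ j + i) = 1 - tm i := by
  induction j generalizing i with
  | zero =>
    have : i = 0 := by simpa using h
    subst this; simp [tm_zero, tm_one]
  | succ j ih =>
    rw [pow_succ] at h ⊢
    rcases Nat.even_or_odd' i with ⟨m, rfl | rfl⟩
    · rw [show 2 ^ j * 2 + 2 * m = 2 * (2 ^ j + m) by ring, tm_double, tm_double, ih m (by omega)]
    · rw [show 2 ^ j * 2 + (2 * m + 1) = 2 * (2 ^ j + m) + 1 by ring, tm_double1, tm_double1,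
        ih m (by omega)]
lemma tm_pow (j : ℕ) : tm (2 ^ j) = 1 := by
  have := tm_pow_add j 0 (by positivity); simpa [tm_zero] using this

lemma tm_three (j i : ℕ) (h : i < 2 ^ j) : tm (3 * 2 ^ j + i) = tm i := by
  have := tm_pow_add (j + 1) (2 ^ j + i) (by rw [pow_succ]; omega)
  rw [show 2 ^ (j + 1) + (2 ^ j + i) = 3 * 2 ^ j + i by rw [pow_succ]; ring, tm_pow_add j i h] at this
  have := tm_le i; omega

/-- The tail `τ_n τ_{n+1} …` of the Thue–Morse sequence. -/
def T (n : ℕ) : ℕ → ℕ := fun i => tm (n + i)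

lemma T_dig (n : ℕ) : Dig (T n) := fun _ => tm_le _
lemma sh_T (k n : ℕ) : sh k (T n) = T (n + k) := by funext i; simp [sh, T, add_assoc]

/-- The basic lexicographic property of the words `τ_1 … τ_{2^j}`: a proper suffix
`τ_{s+1} … τ_{2^j}` is strictly larger than the prefix of its length of the reflected sequence,
and it is at most the prefix of its length of the sequence itself. -/
lemma tm_suffix (j s : ℕ) (h0 : 0 < s) (h : s < 2 ^ j) :
    (∃ i, s + 1 + i ≤ 2 ^ j ∧ (∀ i' < i, tm (s + 1 + i') = 1 - tm (1 + i')) ∧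
      tm (s + 1 + i) = 1 ∧ tm (1 + i) = 1) ∧
    ((∀ i, s + 1 + i ≤ 2 ^ j → tm (s + 1 + i) = tm (1 + i)) ∨
      ∃ i, s + 1 + i ≤ 2 ^ j ∧ (∀ i' < i, tm (s + 1 + i') = tm (1 + i')) ∧
        tm (s + 1 + i) = 0 ∧ tm (1 + i) = 1) := by
  induction j generalizing s with
  | zero => simp at h; omega
  | succ j ih =>
    have hN := tm_pow j
    have h2N := tm_pow (j + 1)
    have hadd := tm_pow_add j
    have hpos : 0 < 2 ^ j := by positivity
    rw [pow_succ] at *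
    set N := 2 ^ j with hNdef
    have h2N' : tm (N + N) = 1 := by rw [← h2N]; congr 1; ring
    rcases lt_trichotomy s N with hs | hs | hs
    · obtain ⟨⟨i, hi, ha, hb, hc⟩, hK2⟩ := ih s h0 hs
      refine ⟨⟨i, by omega, ha, hb, hc⟩, ?_⟩
      rcases hK2 with hK2 | ⟨i, hi, ha, hb, hc⟩
      · right
        obtain ⟨⟨m, hm, ha, hb, hc⟩, -⟩ := ih (N - s) (by omega) (by omega)
        refine ⟨N - s + m, by omega, fun i' hi' => ?_, ?_, ?_⟩
        · by_cases hlt : s + 1 + i' ≤ N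
          · exact hK2 i' hlt
          · obtain ⟨t, rfl⟩ : ∃ t, i' = N - s + t := ⟨i' - (N - s), by omega⟩
            have e1 := ha t (by omega)
            have e2 := hadd (1 + t) (by omega)
            rw [show s + 1 + (N - s + t) = N + (1 + t) by omega, e2,
              show 1 + (N - s + t) = N - s + 1 + t by omega, e1]
        · have e2 := hadd (1 + m) (by omega)
          rw [show s + 1 + (N - s + m) = N + (1 + m) by omega, e2, hc]
        · rw [← hb]; congr 1; omega
      · exact Or.inr ⟨i, by omega, ha, hb, hc⟩
    · subst hs
      refine ⟨⟨N - 1, by omega, fun i' hi' => ?_, ?_, ?_⟩, ?_⟩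
      · rw [add_assoc, hadd _ (by omega)]
      · rw [← h2N']; congr 1; omega
      · rw [← hN]; congr 1; omega
      · by_cases h1 : N = 1
        · left
          intro i hi
          have : i = 0 := by omega
          subst this
          rw [h1] at h2N' ⊢
          simp only [Nat.reduceAdd] at h2N'
          simp [h2N', tm_one]
        · right
          refine ⟨0, by omega, by simp, ?_, by simpa using tm_one⟩
          rw [add_zero, hadd 1 (by omega), tm_one]
    · obtain ⟨s', rfl⟩ : ∃ s', s = N + s' := ⟨s - N, by omega⟩
      obtain ⟨⟨i, hi, ha, hb, hc⟩, hK2⟩ := ih s' (by omega) (by omega)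
      have hcomp : ∀ t, s' + 1 + t < N → tm (N + s' + 1 + t) = 1 - tm (s' + 1 + t) := by
        intro t ht
        rw [← hadd _ ht]; congr 1; ring
      constructor
      · rcases hK2 with hK2 | ⟨m, hm, hma, hmb, hmc⟩
        · refine ⟨N - s' - 1, by omega, fun i' hi' => ?_, ?_, ?_⟩
          · rw [hcomp _ (by omega), hK2 _ (by omega)]
          · rw [← h2N']; congr 1; omega
          · rw [← hK2 _ (by omega), ← hN]; congr 1; omega
        · have hne : s' + 1 + m ≠ N := fun e => by rw [e, hN] at hmb; omega
          refine ⟨m, by omega, fun i' hi' => ?_, ?_, hmc⟩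
          · rw [hcomp _ (by omega), hma _ hi']
          · rw [hcomp _ (by omega), hmb]
      · by_cases hlast : s' + 1 + i = N
        · left
          intro t ht
          by_cases htl : s' + 1 + t = N
          · have : t = i := by omega
            subst this
            rw [hc, ← h2N']; congr 1; omega
          · rw [hcomp _ (by omega), ha _ (by omega)]
            have := tm_le (1 + t); omega
        · right
          refine ⟨i, by omega, fun t ht => ?_, ?_, hc⟩
          · rw [hcomp _ (by omega), ha _ ht]
            have := tm_le (1 + t); omega
          · rw [hcomp _ (by omega), hb]

lemma two_pow_gt (n : ℕ) : n < 2 ^ n := Nat.lt_two_pow_self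

/-- The proper tails of the Thue–Morse sequence are smaller than the sequence. -/
lemma T_lt (n : ℕ) (h : 2 ≤ n) : Lt (T n) (T 1) := by
  obtain ⟨s, rfl⟩ : ∃ s, n = s + 1 := ⟨n - 1, by omega⟩
  have hs := two_pow_gt s
  obtain ⟨-, hK | ⟨i, hi, ha, hb, hc⟩⟩ := tm_suffix (s + 1) s (by omega) (by rw [pow_succ]; omega)
  · -- a suffix with equality at level `s` is strictly smaller at the next level
    exfalso
    obtain ⟨⟨m, hm, ha, hb, hc⟩, -⟩ := tm_suffix s (2 ^ s - s) (by omega) (by omega)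
    have e1 := hK (2 ^ s - s + m) (by rw [pow_succ]; omega)
    rw [show s + 1 + (2 ^ s - s + m) = 2 ^ s + (1 + m) by omega,
      show 1 + (2 ^ s - s + m) = 2 ^ s - s + 1 + m by omega, hb] at e1
    by_cases h1 : 1 + m < 2 ^ s
    · rw [tm_pow_add _ _ h1, hc] at e1; omega
    · omega
  · exact ⟨i, fun i' hi' => ha i' hi', by simp only [T]; omega⟩

/-- The reflected proper tails of the Thue–Morse sequence are smaller than the sequence. -/
lemma cmp_T_lt (n : ℕ) (h : 2 ≤ n) : Lt (cmp (T n)) (T 1) := by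
  obtain ⟨s, rfl⟩ : ∃ s, n = s + 1 := ⟨n - 1, by omega⟩
  obtain ⟨⟨i, hi, ha, hb, hc⟩, -⟩ := tm_suffix s s (by omega) (two_pow_gt s)
  refine ⟨i, fun i' hi' => ?_, by simp only [cmp, T]; omega⟩
  have := ha i' hi'
  have := tm_le (1 + i')
  simp only [cmp, T]; omega

/-! ### Unique expansions below the Thue–Morse sequence -/

/-- A unique expansion that is lexicographically smaller than the Thue–Morse sequence has value
less than `1`, whatever the base. If its value were at least `1`, then by induction on `j` it
would agree with the Thue–Morse sequence on the first `2^j` digits: reflecting the tail after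
position `2^j` bounds the next block from below by the reflection of the first one, and the case
that this bound is attained is excluded by comparing values. -/
lemma V_lt_one_of_Lt {q : ℝ} (hq : 1 < q) {d : ℕ → ℕ} (hU : UU q d) (h : Lt d (T 1)) :
    V q d < 1 := by
  have hq0 : 0 < q := by linarith
  obtain ⟨p, hp, hp2⟩ := h
  have hp0 : d p = 0 := by have := T_dig 1 p; omega
  have hp1 : tm (1 + p) = 1 := by have := tm_le (1 + p); simp only [T] at hp2; omega
  by_contra hV
  push Not at hV
  have hagree : ∀ j : ℕ, 2 ^ j ≤ p := by
    intro j
    induction j with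
    | zero =>
      by_contra hlt
      have : p = 0 := by simpa using hlt
      subst this
      have e1 := V_head hq hU.1
      have e2 := (hU.2 0).1 hp0
      rw [hp0] at e1
      have : V q d < 1 := by
        rw [e1, div_lt_one hq0]; push_cast; rw [zero_add] at e2; linarith
      linarith
    | succ j ih =>
      by_contra hlt
      have hN := tm_pow j
      have hadd := tm_pow_add j
      have hpos : 0 < 2 ^ j := by positivity
      rw [pow_succ] at hlt
      set N := 2 ^ j
      have hd : ∀ i < p, d i = tm (1 + i) := hp
      have hb : UU q (sh N d) := hU.sh N
      have hlast : d (N - 1) = 1 := by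
        rw [hd _ (by omega), ← hN]; congr 1; omega
      have hb1 : V q (cmp (sh N d)) < 1 := by
        have := (hU.2 (N - 1)).2 hlast
        rwa [show N - 1 + 1 = N by omega] at this
      have hlt2 : Lt (cmp (sh N d)) d := Lt_of_V_lt hq hU.1 hb.cmp (by linarith)
      have hpre : ∀ i, N + i < p → N + 1 + i < 2 * N → cmp (sh N d) i = d i := by
        intro i hi hi2
        have e1 := hd _ hi
        have e2 := hd i (by omega)
        have e3 := hadd (1 + i) (by omega)
        have e4 := tm_le (1 + i)
        simp only [cmp, sh]
        rw [e1, e2, show 1 + (N + i) = N + (1 + i) by ring, e3]; omega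
      by_cases hcase : p = 2 * N - 1
      · set z := V q (sh N d)
        set y := V q (sh (2 * N) d)
        have hy : y < 1 := by
          have := (hU.2 p).1 hp0
          rwa [hcase, show 2 * N - 1 + 1 = 2 * N by omega] at this
        have e1 := V_split hq hU.1 N
        have e2 := V_split hq hb.1 N
        have e3 := V_split hq (Dig.cmp d) N
        have e4 := V_cmp hq hU.1
        rw [← cmp_sh, V_cmp hq hb.1] at e3
        rw [sh_sh, ← two_mul] at e2
        have e5 : S q N (sh N d) = S q N (cmp d) := by
          refine S_congr fun i hi => ?_
          have := hU.1 i
          by_cases hi2 : i = N - 1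
          · subst hi2
            simp only [cmp, sh]
            rw [hlast, show N + (N - 1) = p by omega, hp0]
          · have := hpre i (by omega) (by omega)
            have := hb.1 i
            simp only [cmp] at *; omega
        have hQ1 : 1 < q ^ N := one_lt_pow₀ hq (by omega)
        rw [V_cmp hq hb.1] at hb1
        change V q d = S q N d + z / q ^ N at e1
        change z = S q N (sh N d) + y / q ^ N at e2
        change V q (cmp d) = S q N (cmp d) + (1 / (q - 1) - z) / q ^ N at e3
        change 1 / (q - 1) - z < 1 at hb1
        set c := 1 / (q - 1)
        set Q := q ^ N
        have hQ0 : 0 < Q := by linarith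
        have e6 : z * Q = (c - V q d) * Q - (c - z) + y := by
          have : z = (c - V q d) - (c - z) / Q + y / Q := by linarith
          field_simp at this; linarith
        have e7 : (c - z) * (Q - 1) < 1 * (Q - 1) := mul_lt_mul_of_pos_right hb1 (by linarith)
        nlinarith
      · -- the reflected tail is already larger than `d` at index `p - N`
        have hgt : LtAt (p - N) d (cmp (sh N d)) := by
          refine ⟨fun i hi => (hpre i (by omega) (by omega)).symm, ?_⟩
          have e1 := hd (p - N) (by omega)
          have e2 := hadd (1 + (p - N)) (by omega)
          rw [show N + (1 + (p - N)) = 1 + p by omega, hp1] at e2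
          have e3 := tm_le (1 + (p - N))
          simp only [cmp, sh]
          rw [e1, show N + (p - N) = p by omega, hp0]; omega
        have h1 := V_lt_of_LtAt hq (Dig.cmp (sh N d)) hU hgt
        linarith
  have := hagree p
  have := two_pow_gt p
  omega

/-- A digit `b` may be put in front of a unique expansion `e` as soon as `e` (for `b = 0`) or its
reflection (for `b = 1`) is lexicographically smaller than the Thue–Morse sequence. -/
lemma UU_cons_of_Lt {q : ℝ} (hq : 1 < q) {b : ℕ} {e : ℕ → ℕ} (hb : b ≤ 1) (hU : UU q e)
    (h0 : b = 0 → Lt e (T 1)) (h1 : b = 1 → Lt (cmp e) (T 1)) : UU q (cons b e) :=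
  hU.cons hb (fun h => V_lt_one_of_Lt hq hU (h0 h)) fun h => V_lt_one_of_Lt hq hU.cmp (h1 h)

/-! ### The tails of Thue–Morse in base `q_KL`, and prepending digits -/

lemma Lt.trans {c d e : ℕ → ℕ} (h1 : Lt c d) (h2 : Lt d e) : Lt c e := by
  obtain ⟨p, hp, hp2⟩ := h1
  obtain ⟨r, hr, hr2⟩ := h2
  rcases lt_trichotomy p r with h | h | h
  · exact ⟨p, fun i hi => (hp i hi).trans (hr i (by omega)), by rw [← hr p h]; exact hp2⟩
  · subst h
    exact ⟨p, fun i hi => (hp i hi).trans (hr i hi), hp2.trans hr2⟩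
  · exact ⟨r, fun i hi => (hp i (by omega)).trans (hr i hi), by rw [hp r h]; exact hr2⟩

lemma V_T_pos {q : ℝ} (hq : 1 < q) (n : ℕ) : 0 < V q (T n) := by
  have h := two_pow_gt n
  refine (V_summable hq (T_dig n)).tsum_pos (fun i => by positivity) (2 ^ n - n) ?_
  have : T n (2 ^ n - n) = 1 := by
    simp only [T]; rw [show n + (2 ^ n - n) = 2 ^ n by omega, tm_pow]
  rw [this]; positivity

/-- `parry` applies to the family of the tails of the Thue–Morse sequence and their reflections. -/
lemma V_T_lt_one {Q : ℝ} (hQ : 1 < Q) (h1 : V Q (T 1) = 1) {m : ℕ} (hm : 2 ≤ m) :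
    V Q (T m) < 1 ∧ V Q (cmp (T m)) < 1 := by
  set F : (ℕ → ℕ) → Prop := fun c => c = T 1 ∨ ∃ m, 2 ≤ m ∧ (c = T m ∨ c = cmp (T m))
  have hF : ∀ c, F c → Dig c ∧ (c = T 1 ∨ ∃ p, LtAt p c (T 1) ∧ F (sh (p + 1) c)) := by
    rintro c (rfl | ⟨m, hm, rfl | rfl⟩)
    · exact ⟨T_dig 1, Or.inl rfl⟩
    · obtain ⟨p, hp⟩ := T_lt m hm
      exact ⟨T_dig m, Or.inr ⟨p, hp, Or.inr ⟨m + (p + 1), by omega, Or.inl (sh_T _ _)⟩⟩⟩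
    · obtain ⟨p, hp⟩ := cmp_T_lt m hm
      refine ⟨Dig.cmp _, Or.inr ⟨p, hp, Or.inr ⟨m + (p + 1), by omega, Or.inr ?_⟩⟩⟩
      rw [← cmp_sh, sh_T]
  have hpar : ∀ c, F c → V Q c ≤ 1 := fun c hc => parry hQ (T_dig 1) h1.le F hF hc
  constructor
  · obtain ⟨p, hp⟩ := T_lt m hm
    refine lt_one_of_LtAt hQ (T_dig 1) (T_dig m) h1.le hp (hpar _ ?_) ?_
    · exact Or.inr ⟨m + (p + 1), by omega, Or.inl (sh_T _ _)⟩
    · rw [sh_T]; exact V_T_pos hQ _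
  · obtain ⟨p, hp⟩ := cmp_T_lt m hm
    refine lt_one_of_LtAt hQ (T_dig 1) (Dig.cmp _) h1.le hp (hpar _ ?_) ?_
    · refine Or.inr ⟨m + (p + 1), by omega, Or.inr ?_⟩
      rw [← cmp_sh, sh_T]
    · rw [sh_T]; exact V_T_pos hQ _

/-- In base `q_KL` every tail of the Thue–Morse sequence is a unique expansion. -/
lemma UU_T {Q : ℝ} (hQ : 1 < Q) (h1 : V Q (T 1) = 1) {n : ℕ} (hn : 1 ≤ n) : UU Q (T n) := by
  refine ⟨T_dig n, fun i => ⟨fun _ => ?_, fun _ => ?_⟩⟩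
  · rw [sh_T]; exact (V_T_lt_one hQ h1 (by omega)).1
  · rw [sh_T]; exact (V_T_lt_one hQ h1 (by omega)).2

/-- The word `τ_m … τ_{n-1}` followed by the sequence `d`. -/
def G (m n : ℕ) (d : ℕ → ℕ) : ℕ → ℕ := fun i => if m + i < n then tm (m + i) else d (m + i - n)

lemma G_self (n : ℕ) (d : ℕ → ℕ) : G n n d = d := by funext i; simp [G]

lemma G_eq_cons {m n : ℕ} (h : m < n) (d : ℕ → ℕ) : G m n d = cons (tm m) (G (m + 1) n d) := by
  funext i
  rcases i with _ | i
  · simp [G, cons, h]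
  · simp [G, cons, show m + 1 + i = m + (i + 1) by ring]

lemma G_dig {d : ℕ → ℕ} (hd : Dig d) (m n : ℕ) : Dig (G m n d) := by
  intro i; unfold G; split_ifs
  · exact tm_le _
  · exact hd _

lemma sh_G {m n : ℕ} (h : m ≤ n) (d : ℕ → ℕ) : sh (n - m) (G m n d) = d := by
  funext i
  simp only [sh, G]
  rw [if_neg (by omega), show m + (n - m + i) - n = i by omega]

lemma G_LtAt {m n p : ℕ} {d : ℕ → ℕ} (h : m ≤ n) (hp : LtAt p d (T n)) :
    LtAt (n + p - m) (G m n d) (T m) := by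
  constructor
  · intro i hi
    simp only [G, T]
    split_ifs with h2
    · rfl
    · rw [hp.1 _ (by omega)]; simp only [T]; congr 1; omega
  · simp only [G, T]
    rw [if_neg (by omega), show m + (n + p - m) - n = p by omega,
      show m + (n + p - m) = n + p by omega]
    exact hp.2

/-- If `d` first falls below `τ_n τ_{n+1} …` at a digit beyond `τ_N`, where `N ≥ n` is a power of
two, then putting `τ_m … τ_{n-1}` in front of `d` preserves uniqueness. -/
lemma UU_G {q : ℝ} (hq : 1 < q) {d : ℕ → ℕ} (hU : UU q d) {n p j : ℕ} (hn : n ≤ 2 ^ j)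
    (hp : LtAt p d (T n)) (hN : 2 ^ j < n + p) :
    ∀ t m, m + t = n → 1 ≤ m → UU q (G m n d) := by
  intro t
  induction t with
  | zero => rintro m rfl -; rw [add_zero, G_self]; exact hU
  | succ t ih =>
    intro m hm h1
    rw [G_eq_cons (by omega)]
    have hlt := G_LtAt (show m + 1 ≤ n by omega) hp
    refine UU_cons_of_Lt hq (tm_le m) (ih (m + 1) (by omega) (by omega)) (fun _ => ?_) fun _ => ?_
    · exact Lt.trans ⟨_, hlt⟩ (T_lt _ (by omega))
    · obtain ⟨⟨i, hi, ha, hb, hc⟩, -⟩ := tm_suffix j m (by omega) (by omega)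
      refine ⟨i, fun i' hi' => ?_, ?_⟩
      · have e1 := hlt.1 i' (by omega)
        have e2 := ha i' hi'
        have := tm_le (1 + i')
        simp only [cmp, T] at *; omega
      · have e1 := hlt.1 i (by omega)
        simp only [cmp, T] at *; omega

/-! ### Values of tails as polynomials in the base -/

/-- The polynomial `q ^ m - τ_1 q ^ (m-1) - ⋯ - τ_m`, whose value at `q_KL` is the value of the
tail `τ_{m+1} τ_{m+2} …`. -/
def PP : ℕ → ℝ → ℝ
  | 0, _ => 1
  | m + 1, q => q * PP m q - tm (m + 1)

/-- For a sequence beginning with `τ_1 … τ_m`, the polynomial `PP m` compares the value of the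
tail with the defect `V q D - 1`. -/
lemma PP_eq {q : ℝ} (hq : 1 < q) {D : ℕ → ℕ} (hD : Dig D) {m : ℕ}
    (h : ∀ i < m, D i = tm (1 + i)) : PP m q = V q (sh m D) - q ^ m * (V q D - 1) := by
  induction m with
  | zero => rw [sh_zero]; simp [PP]
  | succ m ih =>
    rw [PP, ih fun i hi => h i (by omega), V_tail hq hD, h m (by omega), add_comm 1 m]
    ring

lemma PP_Q {Q : ℝ} (hQ : 1 < Q) (h1 : V Q (T 1) = 1) (m : ℕ) : PP m Q = V Q (T (m + 1)) := by
  rw [PP_eq hQ (T_dig 1) (fun i _ => rfl), h1, sh_T, add_comm]; ring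

lemma PP_mono {q q' : ℝ} (hq : 1 < q) (h : q ≤ q') (m : ℕ) (h0 : ∀ j ≤ m, 0 ≤ PP j q) :
    q' ^ m * (q' - q) ≤ PP (m + 1) q' - PP (m + 1) q := by
  induction m with
  | zero => simp [PP]
  | succ m ih =>
    have e1 := ih fun j hj => h0 j (by omega)
    have e2 := h0 (m + 1) le_rfl
    change _ ≤ (q' * PP (m + 1) q' - tm (m + 1 + 1)) - (q * PP (m + 1) q - tm (m + 1 + 1))
    have e3 := mul_le_mul_of_nonneg_left e1 (by linarith : 0 ≤ q')
    have e4 := mul_nonneg (sub_nonneg.2 h) e2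
    rw [pow_succ]
    linarith

/-- If `τ_1 … τ_{n-1} d` is a unique expansion in base `q`, its value is `< 1` because it is smaller
than the Thue–Morse sequence; reading this on the tails bounds `V q d` by a polynomial. -/
lemma PP_of_G {q : ℝ} (hq : 1 < q) {d : ℕ → ℕ} {n p : ℕ} (hn : 1 ≤ n)
    (hU : UU q (G 1 n d)) (hp : LtAt p d (T n)) :
    V q d < PP (n - 1) q ∧ ∀ j ≤ n - 1, 0 < PP j q := by
  have hD := hU.1
  have hag : ∀ i < n - 1, G 1 n d i = tm (1 + i) := fun i hi => by
    simp only [G]; rw [if_pos (by omega)]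
  have hlt : V q (G 1 n d) < 1 := V_lt_one_of_Lt hq hU ⟨_, G_LtAt hn hp⟩
  constructor
  · rw [PP_eq hq hD hag, sh_G hn]
    have : 0 < q ^ (n - 1) * (1 - V q (G 1 n d)) :=
      mul_pos (pow_pos (by linarith) _) (by linarith)
    linarith
  · intro j hj
    rw [PP_eq hq hD fun i hi => hag i (by omega)]
    have : 0 < q ^ j * (1 - V q (G 1 n d)) :=
      mul_pos (pow_pos (by linarith) _) (by linarith)
    have := V_nonneg hq (sh j (G 1 n d))
    linarith

lemma V_lt_of_G {q Q : ℝ} (hq : 1 < q) (hqQ : q < Q) (h1 : V Q (T 1) = 1) {d : ℕ → ℕ} {n p : ℕ}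
    (hn : 2 ≤ n) (hU : UU q (G 1 n d)) (hp : LtAt p d (T n)) : V q d < V Q (T n) := by
  obtain ⟨e1, e2⟩ := PP_of_G hq (by omega) hU hp
  have e3 := PP_mono hq hqQ.le (n - 2) fun j hj => (e2 j (by omega)).le
  have e4 := PP_Q (hq.trans hqQ) h1 (n - 1)
  rw [show n - 1 + 1 = n by omega] at e4
  rw [show n - 2 + 1 = n - 1 by omega, e4] at e3
  have : 0 < Q ^ (n - 2) * (Q - q) := mul_pos (pow_pos (by linarith) _) (by linarith)
  linarith

/-- Numerical bounds for `q_KL`, from `0 ≤ x_5` and `x_7 ≤ 1 / (q_KL - 1)`. -/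
lemma Q_bounds {Q : ℝ} (hQ : 1 < Q) (h1 : V Q (T 1) = 1) : 7 / 4 < Q ∧ Q < 9 / 5 := by
  have t1 : tm 1 = 1 := by simp [tm]
  have t2 : tm 2 = 1 := by simp [tm]
  have t3 : tm 3 = 0 := by simp [tm]
  have t4 : tm 4 = 1 := by simp [tm]
  have t5 : tm 5 = 0 := by simp [tm]
  have t6 : tm 6 = 0 := by simp [tm]
  have e5 := PP_Q hQ h1 4
  have e7 := PP_Q hQ h1 6
  simp only [PP, t1, t2, t3, t4, t5, t6, Nat.cast_one, Nat.cast_zero, zero_add] at e5 e7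
  have p5 := V_nonneg hQ (T (4 + 1))
  have p7 := V_le hQ (T_dig (6 + 1))
  rw [← e5] at p5
  rw [← e7, le_div_iff₀ (by linarith)] at p7
  constructor
  · by_contra! hlt
    have a1 : Q ^ 2 - Q - 1 ≤ 5 / 16 := by nlinarith
    have a2 : Q ^ 2 ≤ 49 / 16 := by nlinarith
    have a3 : Q ^ 2 * (Q ^ 2 - Q - 1) ≤ 49 / 16 * (5 / 16) := by
      calc _ ≤ Q ^ 2 * (5 / 16) := by gcongr
        _ ≤ _ := by gcongr
    nlinarith
  · by_contra! hlt
    have a1 : 11 / 25 ≤ Q ^ 2 - Q - 1 := by nlinarith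
    have a2 : 81 / 25 ≤ Q ^ 2 := by nlinarith
    have a3 : 81 / 25 * (11 / 25) ≤ Q ^ 2 * (Q ^ 2 - Q - 1) := by gcongr
    have a4 : 2 / 5 ≤ Q ^ 2 * (Q ^ 2 - Q - 1) - 1 := by linarith
    have a5 : 81 / 25 * (2 / 5) ≤ Q ^ 2 * (Q ^ 2 * (Q ^ 2 - Q - 1) - 1) := by gcongr
    have a6 : 81 / 25 * (2 / 5) * (4 / 5) ≤ Q ^ 2 * (Q ^ 2 * (Q ^ 2 - Q - 1) - 1) * (Q - 1) := by
      gcongr; linarith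
    nlinarith

/-- The finite word `τ_1 … τ_N`, followed by zeros. -/
def D0 (N : ℕ) : ℕ → ℕ := fun i => if i < N then tm (1 + i) else 0

lemma D0_dig (N : ℕ) : Dig (D0 N) := by
  intro i; unfold D0; split_ifs
  · exact tm_le _
  · omega

lemma V_zero (q : ℝ) : V q (fun _ => 0) = 0 := by simp [V]

lemma sh_D0 (N : ℕ) : sh N (D0 N) = fun _ => 0 := by
  funext i; simp [sh, D0]

lemma V_D0_Q {Q : ℝ} (hQ : 1 < Q) (h1 : V Q (T 1) = 1) (N : ℕ) :
    V Q (D0 N) = 1 - V Q (T (N + 1)) / Q ^ N := by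
  have e1 := V_split hQ (D0_dig N) N
  have e2 := V_split hQ (T_dig 1) N
  rw [sh_D0, V_zero, S_congr (e := T 1) fun i hi => by simp [D0, T, hi]] at e1
  rw [sh_T, h1, add_comm 1 N] at e2
  rw [e1, zero_div, add_zero]
  linarith

/-- The auxiliary base `q_l < q_KL`, determined by `τ_1 … τ_N 0 0 …` having value `1`. -/
lemma exists_ql {Q : ℝ} (hQ : 1 < Q) (h1 : V Q (T 1) = 1) {N : ℕ} (hN : 2 ≤ N) :
    ∃ q, 8 / 5 < q ∧ q < Q ∧ V q (D0 N) = 1 := by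
  have hb := Q_bounds hQ h1
  have e0 : 1 < V (8 / 5) (D0 N) := by
    have e1 := V_split (q := 8 / 5) (by norm_num) (D0_dig N) 2
    have e2 := V_nonneg (q := 8 / 5) (by norm_num) (sh 2 (D0 N))
    have d0 : D0 N 0 = 1 := by simp [D0, show 0 < N by omega, tm_one]
    have d1 : D0 N 1 = 1 := by simp [D0, show 1 < N by omega, tm]
    rw [S, Finset.sum_range_succ, Finset.sum_range_one, d0, d1] at e1
    have : 0 ≤ V (8 / 5) (sh 2 (D0 N)) / (8 / 5) ^ 2 := by positivity
    norm_num at e1 this ⊢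
    linarith
  have e3 : V Q (D0 N) < 1 := by
    rw [V_D0_Q hQ h1]
    have : 0 < V Q (T (N + 1)) / Q ^ N := div_pos (V_T_pos hQ _) (by positivity)
    linarith
  obtain ⟨q, ⟨ha, hb2⟩, hc⟩ := intermediate_value_Icc' (by linarith : (8 / 5 : ℝ) ≤ Q)
    (V_cont (q := 8 / 5) (q' := Q) (by norm_num) (D0_dig N)) ⟨e3.le, e0.le⟩
  simp only at hc
  refine ⟨q, lt_of_le_of_ne ha ?_, lt_of_le_of_ne hb2 ?_, hc⟩
  · rintro rfl; linarith
  · rintro rfl; linarith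

lemma PP_ql {q : ℝ} (hq : 1 < q) {N : ℕ} (h : V q (D0 N) = 1) {j : ℕ} (hj : j ≤ N) :
    PP j q = V q (sh j (D0 N)) := by
  rw [PP_eq hq (D0_dig N) fun i hi => by simp [D0, show i < N by omega], h]; ring

/-- The value in base `Q` of `τ_r … τ_N` followed by a tail of value `1 / (Q - 1) - 1`.
At `Q = q_KL` the latter is the value of the reflected Thue–Morse sequence, and it is a lower bound
for the values of the tails of the Thue–Morse sequence. -/
def cc (Q : ℝ) (r N : ℕ) : ℝ := S Q (N + 1 - r) (T r) + (1 / (Q - 1) - 1) / Q ^ (N + 1 - r)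

lemma cc_eq {Q : ℝ} (hQ : 1 < Q) {r N : ℕ} (h : r ≤ N) :
    cc Q r N = V Q (T r) - (V Q (T (N + 1)) - (1 / (Q - 1) - 1)) / Q ^ (N + 1 - r) := by
  have e := V_split hQ (T_dig r) (N + 1 - r)
  rw [sh_T, show r + (N + 1 - r) = N + 1 by omega] at e
  rw [cc, e]; ring

lemma kap_lt {Q : ℝ} (hQ : 1 < Q) (h1 : V Q (T 1) = 1) {n : ℕ} (hn : 2 ≤ n) :
    1 / (Q - 1) - 1 < V Q (T n) := by
  have := (V_T_lt_one hQ h1 hn).2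
  rw [V_cmp hQ (T_dig n)] at this
  linarith

lemma cc_lt {Q : ℝ} (hQ : 1 < Q) (h1 : V Q (T 1) = 1) {r N : ℕ} (hr : 1 ≤ r) (h : r ≤ N) :
    cc Q r N < V Q (T r) := by
  rw [cc_eq hQ h]
  have := kap_lt hQ h1 (n := N + 1) (by omega)
  have : 0 < (V Q (T (N + 1)) - (1 / (Q - 1) - 1)) / Q ^ (N + 1 - r) :=
    div_pos (by linarith) (by positivity)
  linarith

/-- The words `τ_s … τ_N` and `τ_{3N+s} … τ_{4N}` coincide for `0 < s ≤ N`. -/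
lemma cc_shift (Q : ℝ) {j s : ℕ} (h : s ≤ 2 ^ j) :
    cc Q (3 * 2 ^ j + s) (4 * 2 ^ j) = cc Q s (2 ^ j) ∨ s = 0 := by
  rcases Nat.eq_zero_or_pos s with h0 | h0
  · exact Or.inr h0
  left
  unfold cc
  rw [show 4 * 2 ^ j + 1 - (3 * 2 ^ j + s) = 2 ^ j + 1 - s by omega]
  congr 1
  refine S_congr fun i hi => ?_
  simp only [T]
  rcases Nat.lt_or_ge (s + i) (2 ^ j) with h2 | h2
  · rw [add_assoc, tm_three j _ h2]
  · have : s + i = 2 ^ j := by omega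
    rw [add_assoc, this, show 3 * 2 ^ j + 2 ^ j = 2 ^ (j + 2) by ring, tm_pow, tm_pow]

/-- Passing from `q_KL` to the smaller base `q = q_l` lowers the polynomial `PP (r - 1)` by more than
the gap between `x_r` and `cc`. -/
lemma PP_ql_lt_cc {Q : ℝ} (hQ : 1 < Q) (h1 : V Q (T 1) = 1) {l : ℕ} (hl : 2 ≤ l) {q : ℝ}
    (hq : 8 / 5 < q) (hqQ : q < Q) (hV : V q (D0 (2 ^ l)) = 1) {r : ℕ} (hr : 2 ≤ r)
    (hrN : r ≤ 2 ^ l) : PP (r - 1) q < cc Q r (2 ^ l) := by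
  obtain ⟨b1, b2⟩ := Q_bounds hQ h1
  have hq1 : 1 < q := by linarith
  have h4 : 4 ≤ 2 ^ l := by
    calc 4 = 2 ^ 2 := by norm_num
      _ ≤ 2 ^ l := Nat.pow_le_pow_right (by norm_num) hl
  set N := 2 ^ l with hN
  set x := V Q (T (N + 1)) with hx
  set κ := 1 / (Q - 1) - 1 with hκ
  have hx0 : 0 < x := V_T_pos hQ _
  have hκ4 : 1 / 4 < κ := by
    have : 5 / 4 < 1 / (Q - 1) := by rw [lt_div_iff₀ (by linarith)]; linarith
    linarith
  -- two zeros follow `τ_N`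
  have hx1 : x * Q ^ 2 < 1 := by
    have e1 := V_tail hQ (T_dig (N + 1)) 0
    have e2 := V_tail hQ (T_dig (N + 1)) 1
    have a1 : T (N + 1) 0 = 0 := by
      simp only [T]; rw [hN, add_zero, tm_pow_add l 1 (by omega), tm_one]
    have a2 : T (N + 1) 1 = 0 := by
      simp only [T]; rw [hN, add_assoc, tm_pow_add l (1 + 1) (by omega)]; simp [tm]
    rw [a1, sh_zero] at e1
    rw [a2, e1, sh_T] at e2
    have := (V_T_lt_one hQ h1 (show 2 ≤ N + 1 + (1 + 1) by omega)).1
    rw [e2] at this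
    push_cast at this
    nlinarith
  have hdiff : x / Q ^ N ≤ (Q - q) / ((q - 1) * (Q - 1)) := by
    have e1 := V_D0_Q hQ h1 N
    have e2 := V_anti hq1 hqQ.le (Dig.cmp (D0 N))
    rw [V_cmp hq1 (D0_dig N), V_cmp hQ (D0_dig N), hV] at e2
    have e3 : (Q - q) / ((q - 1) * (Q - 1)) = 1 / (q - 1) - 1 / (Q - 1) := by
      have : q - 1 ≠ 0 := by linarith
      have : Q - 1 ≠ 0 := by linarith
      field_simp; ring
    rw [e3]; linarith
  have hmono := PP_mono hq1 hqQ.le (r - 2) fun j hj => by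
    rw [PP_ql hq1 hV (by omega)]; exact V_nonneg hq1 _
  rw [show r - 2 + 1 = r - 1 by omega, PP_Q hQ h1, show r - 1 + 1 = r by omega] at hmono
  rw [cc_eq hQ hrN]
  suffices hs : (x - κ) / Q ^ (N + 1 - r) < Q ^ (r - 2) * (Q - q) by linarith
  rw [div_lt_iff₀ (by positivity)]
  have epow : Q ^ (r - 2) * (Q - q) * Q ^ (N + 1 - r) * Q = Q ^ N * (Q - q) := by
    have : Q ^ N = Q ^ (r - 2) * Q ^ (N + 1 - r) * Q := by
      rw [← pow_add, ← pow_succ]; congr 1; omega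
    rw [this]; ring
  have hA : x * ((q - 1) * (Q - 1)) ≤ Q ^ N * (Q - q) := by
    rw [div_le_div_iff₀ (by positivity) (mul_pos (by linarith) (by linarith))] at hdiff
    linarith
  have hB : x * (3 / 5 * (Q - 1)) ≤ x * ((q - 1) * (Q - 1)) := by
    gcongr
    linarith
  have hx2 : x < 16 / 49 := by nlinarith
  have hC : (x - κ) * Q < x * (3 / 5 * (Q - 1)) := by nlinarith
  nlinarith

/-! ### No base below `q_KL` for indices in `S` -/

lemma tm_three' {j s : ℕ} (h : s ≤ 2 ^ j) : tm (3 * 2 ^ j + s) = tm s := by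
  rcases Nat.lt_or_ge s (2 ^ j) with h2 | h2
  · exact tm_three j s h2
  · have : s = 2 ^ j := by omega
    rw [this, show 3 * 2 ^ j + 2 ^ j = 2 ^ (j + 2) by ring, tm_pow, tm_pow]

/-- The word `τ_r … τ_N` followed by the reflection of `τ_1 τ_2 …`; its value in base `q_KL` is
`cc`. -/
def E (r N : ℕ) : ℕ → ℕ := fun i => if r + i ≤ N then tm (r + i) else cmp (T 1) (r + i - (N + 1))

lemma E_dig (r N : ℕ) : Dig (E r N) := by
  intro i; unfold E; split_ifs
  · exact tm_le _
  · exact Dig.cmp _ _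

lemma sh_E (k r N : ℕ) : sh k (E r N) = E (r + k) N := by
  funext i; simp [sh, E, add_assoc]

lemma cc_eq_V_E {Q : ℝ} (hQ : 1 < Q) (h1 : V Q (T 1) = 1) {r N : ℕ} (h : r ≤ N + 1) :
    cc Q r N = V Q (E r N) := by
  have e : sh (N + 1 - r) (E r N) = cmp (T 1) := by
    rw [sh_E, show r + (N + 1 - r) = N + 1 by omega]
    funext i
    simp only [E]
    rw [if_neg (by omega), show N + 1 + i - (N + 1) = i by omega]
  rw [V_split hQ (E_dig r N) (N + 1 - r), e, V_cmp hQ (T_dig 1), h1, cc]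
  congr 1
  refine S_congr fun i hi => ?_
  simp only [E, T]; rw [if_pos (by omega)]

lemma cc_mono {Q : ℝ} (hQ : 1 < Q) (h1 : V Q (T 1) = 1) {r a b : ℕ} (hr : r ≤ 2 ^ a)
    (hab : a ≤ b) : cc Q r (2 ^ a) ≤ cc Q r (2 ^ b) := by
  rcases hab.eq_or_lt with rfl | hab
  · exact le_rfl
  have hlt : 2 ^ a < 2 ^ b := Nat.pow_lt_pow_right (by norm_num) hab
  rw [cc_eq_V_E hQ h1 (r := r) (N := 2 ^ b) (by omega), V_split hQ (E_dig _ _) (2 ^ a + 1 - r), sh_E,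
    show r + (2 ^ a + 1 - r) = 2 ^ a + 1 by omega, cc]
  have e1 : S Q (2 ^ a + 1 - r) (T r) = S Q (2 ^ a + 1 - r) (E r (2 ^ b)) := by
    refine S_congr fun i hi => ?_
    simp only [E, T]; rw [if_pos (by omega)]
  have e2 : V Q (cmp (T 1)) < V Q (E (2 ^ a + 1) (2 ^ b)) := by
    refine V_lt_of_Lt hQ (E_dig _ _) (UU_T hQ h1 le_rfl).cmp ?_
    obtain ⟨⟨i, hi, ha, hb, hc⟩, -⟩ := tm_suffix b (2 ^ a) (by positivity) hlt
    refine ⟨i, fun i' hi' => ?_, ?_⟩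
    · have := ha i' hi'
      simp only [cmp, T, E]; rw [if_pos (by omega)]; omega
    · simp only [cmp, T, E]; rw [if_pos (by omega)]; omega
  rw [V_cmp hQ (T_dig 1), h1] at e2
  rw [e1]
  gcongr

/-- `d` falls below `τ_n τ_{n+1} …` at a position not beyond `τ_N`. -/
def Below (d : ℕ → ℕ) (n N : ℕ) : Prop := ∃ p, n + p ≤ N ∧ LtAt p d (T n)

/-- Quantitative form of the claim for `n`: with `N` the power of two in `[n, 2n)`, a sequence which
is a unique expansion in a base below `q_KL` and falls below the tail `τ_n τ_{n+1} …` not beyond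
`τ_N` has a value smaller than `cc`, hence smaller than `x_n`. -/
def HB (Q : ℝ) (n : ℕ) : Prop :=
  ∃ l0, 1 ≤ l0 ∧ n ≤ 2 ^ l0 ∧ 2 ^ l0 < 2 * n ∧
    ∀ q d, 1 < q → q < Q → UU q d → Below d n (2 ^ l0) → V q d < cc Q n (2 ^ l0)

/-- The bound `HB` extends to every later power of two. If `d` drops below the tail only after the
first power of two, the word `τ_1 … τ_{r-1}` may be prepended to `d` by `UU_G`, and `V q d` is
compared with the polynomial `PP (r - 1)` at the base `q_l`. -/
lemma HB.extend {Q : ℝ} (hQ : 1 < Q) (h1 : V Q (T 1) = 1) {r : ℕ} (h : HB Q r) (hr : 2 ≤ r) {l : ℕ}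
    (hrl : r ≤ 2 ^ l) {q : ℝ} {d : ℕ → ℕ} (hq : 1 < q) (hqQ : q < Q) (hU : UU q d)
    (hd : Below d r (2 ^ l)) : V q d < cc Q r (2 ^ l) := by
  obtain ⟨l0, hl0, ha, hb, hB⟩ := h
  have hl : l0 ≤ l := by
    by_contra! hlt
    have := Nat.pow_le_pow_right (show 0 < 2 by norm_num) (Nat.succ_le_of_lt hlt)
    rw [Nat.succ_eq_add_one, pow_succ] at this
    omega
  obtain ⟨p, hp, hp2⟩ := hd
  rcases Nat.lt_or_ge (2 ^ l0) (r + p) with hlate | hearly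
  · have hl2 : l0 < l := by
      rcases hl.eq_or_lt with h | h
      · subst h; omega
      · exact h
    have hY := UU_G hq hU ha hp2 hlate (r - 1) 1 (by omega) le_rfl
    obtain ⟨c1, c2⟩ := PP_of_G hq (by omega) hY hp2
    obtain ⟨ql, hql1, hql2, hql⟩ := exists_ql hQ h1 (N := 2 ^ l) (by omega)
    have hI := PP_ql_lt_cc hQ h1 (by omega) hql1 hql2 hql hr hrl
    refine lt_trans ?_ hI
    rcases le_or_gt q ql with hle | hgt
    · have e3 := PP_mono hq hle (r - 2) fun j hj => (c2 j (by omega)).le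
      rw [show r - 2 + 1 = r - 1 by omega] at e3
      have : 0 ≤ ql ^ (r - 2) * (ql - q) := mul_nonneg (pow_nonneg (by linarith) _) (by linarith)
      linarith
    · rw [PP_ql (by linarith) hql (by omega)]
      refine lt_of_lt_of_le (V_lt_of_LtAt hq ((D0_dig _).sh (r - 1)) hU (p := p) ⟨?_, ?_⟩)
        (V_anti (by linarith) hgt.le ((D0_dig _).sh _))
      · intro i hi
        rw [hp2.1 i hi]
        simp only [T, sh, D0]
        rw [if_pos (by omega)]; congr 1; omega
      · have := hp2.2
        simp only [T, sh, D0] at *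
        rw [if_pos (by omega), show 1 + (r - 1 + p) = r + p by omega]; exact this
  · exact (hB q d hq hqQ hU ⟨p, hearly, hp2⟩).trans_le (cc_mono hQ h1 ha hl)

/-- A sequence starting with `0` which is not constant can only be a unique expansion in a base
greater than the golden ratio. -/
lemma golden {q : ℝ} (hq : 1 < q) {d : ℕ → ℕ} (hU : UU q d) (h0 : d 0 = 0) (hne : ∃ i, d i ≠ 0) :
    1 < q * (q - 1) := by
  classical
  have hs := Nat.find_spec hne
  have hm : ∀ i < Nat.find hne, d i = 0 := fun i hi => by simpa using Nat.find_min hne hi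
  set k := Nat.find hne
  obtain ⟨i, hi⟩ : ∃ i, k = i + 1 := ⟨k - 1, by
    have : k ≠ 0 := by rintro h; rw [h] at hs; exact hs h0
    omega⟩
  have hd1 : d (i + 1) = 1 := by have := hU.1 (i + 1); rw [← hi] at *; omega
  have e1 := (hU.2 i).1 (hm i (by omega))
  have e2 := (hU.2 (i + 1)).2 hd1
  have e3 := V_tail hq hU.1 (i + 1)
  rw [V_cmp hq (hU.1.sh _)] at e2
  rw [hd1] at e3
  push_cast at e3
  have e4 : 1 / (q - 1) < q := by nlinarith
  rwa [div_lt_iff₀ (by linarith)] at e4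

lemma golden_bound {q : ℝ} (hq : 1 < q) (h : 1 < q * (q - 1)) : 8 / 5 < q ∧ 13 / 5 < q ^ 2 := by
  have : 8 / 5 < q := by by_contra! h2; nlinarith
  exact ⟨this, by nlinarith⟩

lemma HB_base_even {Q : ℝ} (hQ : 1 < Q) (h1 : V Q (T 1) = 1) {l : ℕ} (hl : 1 ≤ l) :
    HB Q (2 ^ l) := by
  have hpos : 0 < 2 ^ l := by positivity
  obtain ⟨b1, b2⟩ := Q_bounds hQ h1
  refine ⟨l, hl, le_rfl, by omega, ?_⟩
  rintro q d hq hqQ hU ⟨p, hp, hp2⟩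
  have hp0 : p = 0 := by omega
  subst hp0
  have hd0 : d 0 = 0 := by
    have := hp2.2; simp only [T, add_zero, tm_pow] at this; omega
  have ecc : cc Q (2 ^ l) (2 ^ l) = 1 / (Q * (Q - 1)) := by
    have : Q - 1 ≠ 0 := by linarith
    rw [cc, show 2 ^ l + 1 - 2 ^ l = 1 by omega, S, Finset.sum_range_one]
    simp only [T, add_zero, tm_pow]
    push_cast; field_simp; ring
  have hcc : 25 / 36 ≤ cc Q (2 ^ l) (2 ^ l) := by
    rw [ecc, le_div_iff₀ (mul_pos (by linarith) (by linarith))]; nlinarith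
  by_cases hne : ∃ i, d i ≠ 0
  · obtain ⟨g1, -⟩ := golden_bound hq (golden hq hU hd0 hne)
    have e1 := V_head hq hU.1
    have e2 := (hU.2 0).1 hd0
    have : V q d < 25 / 36 := by
      rw [e1, hd0, div_lt_iff₀ (by linarith)]; push_cast at *; linarith
    linarith
  · push Not at hne
    have : d = fun _ => 0 := funext hne
    rw [this, V_zero]; linarith

lemma HB_three {Q : ℝ} (hQ : 1 < Q) (h1 : V Q (T 1) = 1) : HB Q 3 := by
  obtain ⟨b1, b2⟩ := Q_bounds hQ h1
  have t3 : tm 3 = 0 := by simp [tm]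
  have t4 : tm 4 = 1 := by simp [tm]
  refine ⟨2, by omega, by omega, by omega, ?_⟩
  rintro q d hq hqQ hU ⟨p, hp, hp2⟩
  have hp1 : p = 1 := by
    rcases (show p = 0 ∨ p = 1 by omega) with rfl | rfl
    · have := hp2.2; simp only [T, add_zero, t3] at this; omega
    · rfl
  subst hp1
  have hd0 : d 0 = 0 := by
    have := hp2.1 0 (by omega); simpa only [T, add_zero, t3] using this
  have hd1 : d 1 = 0 := by
    have := hp2.2; simp only [T, show 3 + 1 = 4 by rfl, t4] at this; omega
  have ecc : cc Q 3 (2 ^ 2) = 1 / (Q ^ 2 * (Q - 1)) := by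
    have : Q - 1 ≠ 0 := by linarith
    rw [cc, show 2 ^ 2 + 1 - 3 = 2 by omega, S, Finset.sum_range_succ, Finset.sum_range_one]
    simp only [T, add_zero, show 3 + 1 = 4 by rfl, t3, t4]
    push_cast; field_simp; ring
  have hcc : 5 / 13 ≤ cc Q 3 (2 ^ 2) := by
    rw [ecc, le_div_iff₀ (mul_pos (by positivity) (by linarith))]
    have : Q ^ 2 ≤ 81 / 25 := by nlinarith
    have : Q ^ 2 * (Q - 1) ≤ 81 / 25 * (4 / 5) := by
      gcongr
      linarith
    linarith
  by_cases hne : ∃ i, d i ≠ 0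
  · obtain ⟨g1, g2⟩ := golden_bound hq (golden hq hU hd0 hne)
    have e1 := V_tail hq hU.1 0
    have e2 := V_tail hq hU.1 1
    have e3 := (hU.2 1).1 hd1
    rw [sh_zero, hd0] at e1
    rw [hd1, e1] at e2
    push_cast at e2
    have := V_nonneg hq d
    have : V q d < 5 / 13 := by nlinarith
    exact this.trans_le hcc
  · push Not at hne
    have : d = fun _ => 0 := funext hne
    rw [this, V_zero]; exact lt_of_lt_of_le (by norm_num) hcc

lemma memS_two_le {n : ℕ} (h : memS n) : 2 ≤ n := by
  induction h with
  | two => omega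
  | three => omega
  | four => omega
  | step k n hk h1 h2 h3 h ih => omega

lemma LtAt_three {j r p : ℕ} {d : ℕ → ℕ} (h : r + p ≤ 2 ^ j) :
    LtAt p d (T (3 * 2 ^ j + r)) ↔ LtAt p d (T r) := by
  have : ∀ i ≤ p, T (3 * 2 ^ j + r) i = T r i := fun i hi => by
    simp only [T]; rw [add_assoc, tm_three' (by omega)]
  constructor
  · exact fun h => ⟨fun i hi => by rw [h.1 i hi, this i hi.le], by rw [← this p le_rfl]; exact h.2⟩
  · exact fun h => ⟨fun i hi => by rw [h.1 i hi, this i hi.le], by rw [this p le_rfl]; exact h.2⟩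

/-- The recursion defining `S` reproduces `HB`: the words seen from `3N + r` and from `r` coincide
up to the digits `τ_{4N}` and `τ_N`. -/
lemma HB_of_memS {Q : ℝ} (hQ : 1 < Q) (h1 : V Q (T 1) = 1) {n : ℕ} (h : memS n) : HB Q n := by
  induction h with
  | two => exact HB_base_even hQ h1 (l := 1) le_rfl
  | three => exact HB_three hQ h1
  | four => exact HB_base_even hQ h1 (l := 2) (by omega)
  | step k n hk ha hb hc h ih =>
    obtain ⟨j, rfl⟩ : ∃ j, k = j + 1 := ⟨k - 1, by omega⟩
    rw [show j + 1 - 1 = j by omega] at *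
    have e4 : 2 ^ (j + 1 + 1) = 4 * 2 ^ j := by ring
    obtain ⟨r, rfl⟩ : ∃ r, n = 3 * 2 ^ j + r := ⟨n - 3 * 2 ^ j, by omega⟩
    rw [show 3 * 2 ^ j + r - 3 * 2 ^ j = r by omega] at *
    have hr := memS_two_le h
    refine ⟨j + 1 + 1, by omega, hb, by omega, ?_⟩
    rintro q d hq hqQ hU ⟨p, hp, hp2⟩
    rw [e4] at *
    rcases cc_shift Q (j := j) (s := r) (by omega) with h' | h'
    · rw [h']
      refine ih.extend hQ h1 hr (by omega) hq hqQ hU ⟨p, by omega, ?_⟩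
      exact (LtAt_three (by omega)).1 hp2
    · omega

/-- For `n ∈ S ∪ {1}` no base below `q_KL` makes the expansion of `x_n` unique. -/
lemma no_smaller {Q : ℝ} (hQ : 1 < Q) (h1 : V Q (T 1) = 1) {n : ℕ} (hn : memS n ∨ n = 1) {q : ℝ}
    (hq : 1 < q) (hqQ : q < Q) {d : ℕ → ℕ} (hU : UU q d) : V q d ≠ V Q (T n) := by
  intro heq
  have hlt : V q d < V q (T n) := by
    rw [heq]; exact V_strict hq hqQ (T_dig n) (V_T_pos hQ n)
  have hL := Lt_of_V_lt hq (T_dig n) hU hlt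
  rcases hn with hn | rfl
  · obtain ⟨p, hp⟩ := hL
    have hn2 := memS_two_le hn
    obtain ⟨l0, hl0, ha, hb, hB⟩ := HB_of_memS hQ h1 hn
    rcases Nat.lt_or_ge (2 ^ l0) (n + p) with hlate | hearly
    · have hY := UU_G hq hU ha hp hlate (n - 1) 1 (by omega) le_rfl
      have := V_lt_of_G hq hqQ h1 hn2 hY hp
      linarith
    · have a := hB q d hq hqQ hU ⟨p, hearly, hp⟩
      have b := cc_lt hQ h1 (by omega) ha
      linarith
  · have := V_lt_one_of_Lt hq hU hL
    linarith

/-! ### Bases below `q_KL` for the other indices -/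

/-- The periodic sequence `(τ_1 … τ_{N-1} 0)^∞`. -/
def al (N : ℕ) : ℕ → ℕ := fun i => if i % N = N - 1 then 0 else tm (1 + i % N)

lemma al_dig (N : ℕ) : Dig (al N) := by
  intro i; unfold al; split_ifs
  · omega
  · exact tm_le _

lemma al_lt {N i : ℕ} (h : i < N - 1) : al N i = tm (1 + i) := by
  rw [al, Nat.mod_eq_of_lt (by omega), if_neg (by omega)]

lemma al_last {N : ℕ} (h : 0 < N) : al N (N - 1) = 0 := by
  rw [al, Nat.mod_eq_of_lt (by omega), if_pos rfl]

lemma al_period (N i : ℕ) : al N (i % N) = al N i := by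
  simp [al]

lemma al_mod_add (N s i : ℕ) : al N (s + i) = al N (s % N + i) := by
  simp [al]

lemma sh_al_self (N : ℕ) : sh N (al N) = al N := by
  funext i; simp [sh, al]

lemma cmp_al (k : ℕ) : cmp (al (2 ^ (k + 1))) = sh (2 ^ k) (al (2 ^ (k + 1))) := by
  funext i
  have hM : 0 < 2 ^ k := by positivity
  have hN : 2 ^ (k + 1) = 2 * 2 ^ k := by ring
  have ht : i % (2 ^ (k + 1)) < 2 ^ (k + 1) := Nat.mod_lt _ (by positivity)
  simp only [cmp, sh]
  rw [← al_period _ i, add_comm (2 ^ k) i, al_mod_add _ i]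
  set t := i % 2 ^ (k + 1)
  rcases Nat.lt_or_ge t (2 ^ k) with h | h
  · rw [al_lt (i := t) (by omega)]
    rcases Nat.lt_or_ge t (2 ^ k - 1) with h2 | h2
    · rw [al_lt (by omega), show 1 + (t + 2 ^ k) = 2 ^ k + (1 + t) by ring,
        tm_pow_add k _ (by omega)]
    · rw [show t + 2 ^ k = 2 ^ (k + 1) - 1 by omega, al_last (by omega),
        show 1 + t = 2 ^ k by omega, tm_pow]
  · rw [← al_period _ (t + 2 ^ k), show t + 2 ^ k = t - 2 ^ k + 2 ^ (k + 1) by omega,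
      Nat.add_mod_right, Nat.mod_eq_of_lt (by omega), al_lt (i := t - 2 ^ k) (by omega)]
    rcases Nat.lt_or_ge t (2 ^ (k + 1) - 1) with h2 | h2
    · rw [al_lt h2, show 1 + t = 2 ^ k + (1 + (t - 2 ^ k)) by omega, tm_pow_add k _ (by omega)]
      have := tm_le (1 + (t - 2 ^ k)); omega
    · rw [show t = 2 ^ (k + 1) - 1 by omega, al_last (by omega),
        show 1 + (2 ^ (k + 1) - 1 - 2 ^ k) = 2 ^ k by omega, tm_pow]

/-- Every shift of the periodic sequence is equal to it or smaller. -/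
lemma sh_al (k s : ℕ) : sh s (al (2 ^ (k + 1))) = al (2 ^ (k + 1)) ∨
    ∃ p, LtAt p (sh s (al (2 ^ (k + 1)))) (al (2 ^ (k + 1))) := by
  have hN : 2 ≤ 2 ^ (k + 1) := by rw [pow_succ]; have : 0 < 2 ^ k := by positivity
                                  omega
  have htp := tm_pow (k + 1)
  have ht : s % (2 ^ (k + 1)) < 2 ^ (k + 1) := Nat.mod_lt _ (by positivity)
  have hsh : ∀ i, sh s (al (2 ^ (k + 1))) i = al (2 ^ (k + 1)) (s % 2 ^ (k + 1) + i) :=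
    fun i => al_mod_add _ s i
  have hsuf := fun h0 => tm_suffix (k + 1) (s % 2 ^ (k + 1)) h0 ht
  set t := s % 2 ^ (k + 1)
  set N := 2 ^ (k + 1)
  rcases Nat.eq_zero_or_pos t with h | h
  · left; funext i; rw [hsh, h, zero_add]
  right
  obtain ⟨-, heq | ⟨i, hi, ha, hb, hc⟩⟩ := hsuf h
  · refine ⟨N - t - 1, fun i hi => ?_, ?_⟩
    · rw [hsh, al_lt (by omega), al_lt (by omega), ← heq i (by omega)]; congr 1; ring
    · rw [hsh, show t + (N - t - 1) = N - 1 by omega, al_last (by omega), al_lt (by omega),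
        ← heq _ (by omega), show t + 1 + (N - t - 1) = N by omega, htp]
      omega
  · have hne : t + 1 + i ≠ N := by
      intro hh; rw [hh] at hb; omega
    refine ⟨i, fun i' hi' => ?_, ?_⟩
    · rw [hsh, al_lt (by omega), al_lt (by omega), ← ha i' hi']; congr 1; ring
    · rw [hsh, al_lt (by omega), al_lt (by omega), hc, show 1 + (t + i) = t + 1 + i by ring, hb]
      omega

lemma V_al {q : ℝ} (hq : 1 < q) {k : ℕ} (h : V q (D0 (2 ^ (k + 1))) = 1) :
    V q (al (2 ^ (k + 1))) = 1 := by
  have htp := tm_pow (k + 1)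
  have hpos : 0 < 2 ^ (k + 1) := by positivity
  set N := 2 ^ (k + 1)
  have e1 := V_split hq (al_dig N) N
  have e2 := V_split hq (D0_dig N) N
  rw [sh_al_self] at e1
  rw [h, sh_D0, V_zero, zero_div, add_zero] at e2
  have e3 : S q N (D0 N) = S q N (al N) + 1 / q ^ N := by
    obtain ⟨K, hK⟩ : ∃ K, N = K + 1 := ⟨N - 1, by omega⟩
    have htp' : tm (K + 1) = 1 := hK ▸ htp
    rw [hK, S, S, Finset.sum_range_succ, Finset.sum_range_succ]
    have a1 : D0 (K + 1) K = 1 := by simp [D0, add_comm 1 K, htp']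
    have a2 : al (K + 1) K = 0 := al_last (N := K + 1) (by omega)
    rw [a1, a2]
    have : ∀ i ∈ Finset.range K,
        (D0 (K + 1) i : ℝ) / q ^ (i + 1) = (al (K + 1) i : ℝ) / q ^ (i + 1) := fun i hi => by
      rw [Finset.mem_range] at hi
      rw [al_lt (by omega)]; simp [D0, show i < K + 1 by omega]
    rw [Finset.sum_congr rfl this]
    simp
  have hQ1 : 1 < q ^ N := one_lt_pow₀ hq (by omega)
  have hQ0 : q ^ N ≠ 0 := by positivity
  rw [e3] at e2
  have e4 : V q (al N) * q ^ N = S q N (al N) * q ^ N + V q (al N) := by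
    nth_rewrite 1 [e1]; field_simp
  have e5 : q ^ N = S q N (al N) * q ^ N + 1 := by
    have := congrArg (· * q ^ N) e2
    simp only [one_mul, add_mul] at this
    rwa [one_div, inv_mul_cancel₀ hQ0] at this
  have e6 : (V q (al N) - 1) * (q ^ N - 1) = 0 := by linarith
  rcases mul_eq_zero.1 e6 with h' | h' <;> linarith

lemma V_sh_al_lt {ql q : ℝ} (hql : 1 < ql) (h : ql < q) {k : ℕ}
    (hV : V ql (D0 (2 ^ (k + 1))) = 1) (s : ℕ) : V q (sh s (al (2 ^ (k + 1)))) < 1 := by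
  refine V_lt_one hql h ((al_dig _).sh s) ?_
  refine parry hql (al_dig (2 ^ (k + 1))) (V_al hql hV).le
    (fun c => ∃ s, c = sh s (al (2 ^ (k + 1)))) ?_ ⟨s, rfl⟩
  rintro c ⟨s, rfl⟩
  refine ⟨(al_dig _).sh s, (sh_al k s).imp_right ?_⟩
  rintro ⟨p, hp⟩
  exact ⟨p, hp, _, sh_sh _ _ _⟩

lemma UU_al {ql q : ℝ} (hql : 1 < ql) (h : ql < q) {k : ℕ}
    (hV : V ql (D0 (2 ^ (k + 1))) = 1) : UU q (al (2 ^ (k + 1))) := by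
  refine ⟨al_dig _, fun i => ⟨fun _ => V_sh_al_lt hql h hV _, fun _ => ?_⟩⟩
  rw [cmp_sh, cmp_al, sh_sh]
  exact V_sh_al_lt hql h hV _

/-- `d` is a unique expansion in all bases of an interval `(q_0, q_KL)`, its value at `q_0` is at
least `y`, and the first difference of `d` with `τ_n τ_{n+1} …`, at which `d` is smaller,
occurs opposite some `τ_i` with `i` at most the first power of two `≥ max n 2`. -/
def Wit (Q y : ℝ) (n : ℕ) : Prop :=
  ∃ q0 d, 1 < q0 ∧ q0 < Q ∧ (∀ q, q0 < q → q < Q → UU q d) ∧ y ≤ V q0 d ∧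
    ∃ p, LtAt p d (T n) ∧ ∀ m, 1 ≤ m → n ≤ 2 ^ m → n + p ≤ 2 ^ m

lemma Wit_one {Q : ℝ} (hQ : 1 < Q) (h1 : V Q (T 1) = 1) : Wit Q 1 1 := by
  obtain ⟨ql, hql1, hql2, hql⟩ := exists_ql hQ h1 (N := 2 ^ (0 + 1)) (by norm_num)
  have hq1 : 1 < ql := by linarith
  refine ⟨ql, al (2 ^ (0 + 1)), hq1, hql2, fun q h _ => UU_al hq1 h hql, (V_al hq1 hql).ge, 1,
    ⟨fun i hi => ?_, ?_⟩, fun m hm _ => ?_⟩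
  · obtain rfl : i = 0 := by omega
    simp [al, T]
  · simp [al, T, tm]
  · calc 1 + 1 = 2 ^ 1 := by norm_num
      _ ≤ 2 ^ m := Nat.pow_le_pow_right (by norm_num) hm

/-- Prepending a suffix of `τ_1 … τ_N` to the reflected periodic sequence preserves uniqueness. -/
lemma UU_G_al {ql q : ℝ} (hql : 1 < ql) (h : ql < q) {k : ℕ}
    (hV : V ql (D0 (2 ^ (k + 1))) = 1) : ∀ t m, m + t = 2 ^ (k + 1) + 1 → 1 ≤ m →
    UU q (G m (2 ^ (k + 1) + 1) (cmp (al (2 ^ (k + 1))))) := by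
  have hq : 1 < q := hql.trans h
  have htp := tm_pow (k + 1)
  have hpos : 0 < 2 ^ (k + 1) := by positivity
  have hU := UU_al hql h hV
  have hsuf := tm_suffix (k + 1)
  set N := 2 ^ (k + 1)
  intro t
  induction t with
  | zero => rintro m hm -; rw [add_zero] at hm; rw [hm, G_self]; exact hU.cmp
  | succ t ih =>
    intro m hm hm1
    rw [G_eq_cons (by omega)]
    have hGlt : ∀ i, m + 1 + i ≤ N → G (m + 1) (N + 1) (cmp (al N)) i = tm (m + 1 + i) :=
      fun i hi => by simp only [G]; rw [if_pos (by omega)]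
    have hGge : ∀ i, G (m + 1) (N + 1) (cmp (al N)) (N - m + i) = cmp (al N) i := fun i => by
      simp only [G]; rw [if_neg (by omega)]; congr 1; omega
    rcases (show m = N ∨ m < N by omega) with hmN | hmN
    · refine UU_cons_of_Lt hq (tm_le m) (ih (m + 1) (by omega) (by omega))
        (fun h => by rw [hmN] at h; omega) fun _ => ?_
      rw [hmN, G_self, cmp_cmp (al_dig N)]
      refine ⟨N - 1, fun i hi => al_lt hi, ?_⟩
      rw [al_last hpos, T, show 1 + (N - 1) = N by omega, htp]; omega
    · obtain ⟨⟨i, hi, ha, hb, hc⟩, hK2⟩ := hsuf m (by omega) hmN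
      refine UU_cons_of_Lt hq (tm_le m) (ih (m + 1) (by omega) (by omega))
        (fun _ => ?_) fun _ => ?_
      · rcases hK2 with heq | ⟨i, hi, ha, hb, hc⟩
        · -- `τ_{m+1} … τ_N` is a prefix of `τ_1 τ_2 …`: the decision falls in the periodic part
          obtain ⟨⟨i, hi, ha, hb, hc⟩, -⟩ := hsuf (N - m) (by omega) (by omega)
          refine ⟨N - m + i, fun i' hi' => ?_, ?_⟩
          · rcases Nat.lt_or_ge i' (N - m) with h2 | h2
            · rw [hGlt i' (by omega), heq i' (by omega)]; rfl
            · obtain ⟨i'', rfl⟩ : ∃ i'', i' = N - m + i'' := ⟨i' - (N - m), by omega⟩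
              have := ha i'' (by omega)
              rw [hGge, cmp, al_lt (by omega), T, show 1 + (N - m + i'') = N - m + 1 + i'' by ring,
                this]
          · rw [hGge, cmp, al_lt (by omega), T, show 1 + (N - m + i) = N - m + 1 + i by ring, hb, hc]
            omega
        · refine ⟨i, fun i' hi' => ?_, ?_⟩
          · rw [hGlt i' (by omega), ha i' hi']; rfl
          · rw [hGlt i hi, hb, T, hc]; omega
      · refine ⟨i, fun i' hi' => ?_, ?_⟩
        · have := tm_le (1 + i')
          rw [cmp, hGlt i' (by omega), ha i' hi', T]; omega
        · rw [cmp, hGlt i hi, hb, T, hc]; omega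

lemma S_anti {q q' : ℝ} (hq : 1 < q) (h : q ≤ q') (k : ℕ) (d : ℕ → ℕ) : S q' k d ≤ S q k d := by
  refine Finset.sum_le_sum fun i _ => ?_
  gcongr

/-- For `2N < n = 2N + r ≤ 3N` the witness is the reflection of `τ_r … τ_N` followed by the periodic
sequence `al N`; its tail has value `1` at `q_l`, while the corresponding tail of `x_n` has a value
`< 1` at `q_KL`. -/
lemma Wit_base {Q : ℝ} (hQ : 1 < Q) (h1 : V Q (T 1) = 1) {k r : ℕ} (hr : 1 ≤ r)
    (hrN : r ≤ 2 ^ (k + 1)) :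
    ∃ y, V Q (T (2 * 2 ^ (k + 1) + r)) < y ∧ Wit Q y (2 * 2 ^ (k + 1) + r) := by
  have hpos : 0 < 2 ^ k := by positivity
  have hN2 : 2 ^ (k + 1) = 2 * 2 ^ k := by ring
  have hadd : ∀ i, i < 2 * 2 ^ (k + 1) → tm (2 * 2 ^ (k + 1) + i) = 1 - tm i := by
    intro i hi
    rw [show 2 * 2 ^ (k + 1) = 2 ^ (k + 2) by ring] at *
    exact tm_pow_add _ i hi
  have hadd1 := tm_pow_add (k + 1)
  have htp4 : tm (2 * 2 ^ (k + 1) + 2 * 2 ^ (k + 1)) = 1 := by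
    rw [show 2 * 2 ^ (k + 1) + 2 * 2 ^ (k + 1) = 2 ^ (k + 3) by ring, tm_pow]
  obtain ⟨ql, hql1, hql2, hql⟩ := exists_ql hQ h1 (N := 2 ^ (k + 1)) (by omega)
  have hq1 : 1 < ql := by linarith
  have hVal := V_al hq1 hql
  have hUU := fun q hq => UU_G_al (q := q) hq1 hq hql (2 ^ (k + 1) + 1 - r) r (by omega) hr
  have hpow : ∀ m, 2 * 2 ^ (k + 1) < 2 ^ m → 4 * 2 ^ (k + 1) ≤ 2 ^ m := by
    intro m hm
    rw [show 2 * 2 ^ (k + 1) = 2 ^ (k + 2) by ring] at hm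
    have := (Nat.pow_lt_pow_iff_right (show 1 < 2 by norm_num)).1 hm
    calc 4 * 2 ^ (k + 1) = 2 ^ (k + 3) := by ring
      _ ≤ 2 ^ m := Nat.pow_le_pow_right (by norm_num) (by omega)
  set N := 2 ^ (k + 1)
  set e := G r (N + 1) (cmp (al N))
  have hel : ∀ i, r + i ≤ N → e i = tm (r + i) := fun i hi => by
    simp only [e, G]; rw [if_pos (by omega)]
  have heg : ∀ i, e (N + 1 - r + i) = cmp (al N) i := fun i => by
    simp only [e, G]; rw [if_neg (by omega)]; congr 1; omega
  have hlt : LtAt (2 * N - r) (cmp e) (T (2 * N + r)) := by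
    constructor
    · intro i hi
      rw [T, add_assoc, hadd _ (by omega), cmp]
      rcases Nat.lt_or_ge N (r + i) with h2 | h2
      · obtain ⟨i', rfl⟩ : ∃ i', i = N + 1 - r + i' := ⟨i - (N + 1 - r), by omega⟩
        rw [heg, cmp, al_lt (by omega), show r + (N + 1 - r + i') = N + (1 + i') by omega,
          hadd1 _ (by omega)]
      · rw [hel i h2]
    · rw [T, show 2 * N + r + (2 * N - r) = 2 * N + 2 * N by omega, htp4, cmp,
        show 2 * N - r = N + 1 - r + (N - 1) by omega, heg, cmp, al_last (by omega)]
      omega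
  refine ⟨V ql (cmp e), ?_, ql, cmp e, hq1, hql2, fun q h _ => (hUU q h).cmp, le_rfl,
    2 * N - r, hlt, fun m _ hm => ?_⟩
  · have e1 := V_split hq1 (Dig.cmp e) (N + 1 - r)
    have e2 := V_split hQ (T_dig (2 * N + r)) (N + 1 - r)
    have hsh : sh (N + 1 - r) (cmp e) = al N := by
      have : sh (N + 1 - r) e = cmp (al N) := funext heg
      rw [← cmp_sh, this, cmp_cmp (al_dig N)]
    have hS : S Q (N + 1 - r) (T (2 * N + r)) = S Q (N + 1 - r) (cmp e) :=
      S_congr fun i hi => (hlt.1 i (by omega)).symm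
    rw [hsh, hVal] at e1
    rw [sh_T, hS] at e2
    have e3 := S_anti hq1 hql2.le (N + 1 - r) (cmp e)
    have e4 := (V_T_lt_one hQ h1 (show 2 ≤ 2 * N + r + (N + 1 - r) by omega)).1
    have e5 : V Q (T (2 * N + r + (N + 1 - r))) / Q ^ (N + 1 - r) < 1 / Q ^ (N + 1 - r) := by
      gcongr
    have e6 : 1 / Q ^ (N + 1 - r) ≤ 1 / ql ^ (N + 1 - r) := by gcongr
    linarith
  · have := hpow m (by omega); omega

/-- The tails starting at `r` and at `3N + r`, `N` a power of two, first differ at the digits with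
indices `2N` and `5N`. -/
lemma T_three_lt {j r : ℕ} (hr : r ≤ 2 ^ j) : Lt (T (3 * 2 ^ j + r)) (T r) := by
  have hpos : 0 < 2 ^ j := by positivity
  have hadd := tm_pow_add (j + 2)
  have hadd1 := tm_pow_add j
  have htp := tm_pow j
  have htp1 := tm_pow (j + 1)
  have e4 : 2 ^ (j + 2) = 4 * 2 ^ j := by ring
  have e2 : 2 ^ (j + 1) = 2 * 2 ^ j := by ring
  rw [e4] at hadd
  rw [e2] at htp1
  refine ⟨2 * 2 ^ j - r, fun i hi => ?_, ?_⟩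
  · simp only [T]
    rw [add_assoc]
    rcases Nat.lt_or_ge (2 ^ j) (r + i) with h | h
    · obtain ⟨i', hi'⟩ : ∃ i', r + i = 2 ^ j + i' := ⟨r + i - 2 ^ j, by omega⟩
      rw [hi', show 3 * 2 ^ j + (2 ^ j + i') = 4 * 2 ^ j + i' by ring, hadd _ (by omega),
        hadd1 _ (by omega)]
    · exact tm_three' h
  · simp only [T]
    rw [show 3 * 2 ^ j + r + (2 * 2 ^ j - r) = 4 * 2 ^ j + 2 ^ j by omega, hadd _ (by omega), htp,
      show r + (2 * 2 ^ j - r) = 2 * 2 ^ j by omega, htp1]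
    omega

lemma Wit.step {Q y : ℝ} {j r : ℕ} (hj : 1 ≤ j) (hr : 1 ≤ r) (hrN : r ≤ 2 ^ j) (h : Wit Q y r) :
    Wit Q y (3 * 2 ^ j + r) := by
  obtain ⟨q0, d, ha, hb, hU, hV, p, hp, hm⟩ := h
  have hrp := hm j hj hrN
  refine ⟨q0, d, ha, hb, hU, hV, p, (LtAt_three hrp).2 hp, fun m _ hm2 => ?_⟩
  have : 2 ^ (j + 1) < 2 ^ m := by rw [pow_succ]; omega
  have := (Nat.pow_lt_pow_iff_right (show 1 < 2 by norm_num)).1 this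
  have : 2 ^ (j + 2) ≤ 2 ^ m := Nat.pow_le_pow_right (by norm_num) (by omega)
  have e4 : 2 ^ (j + 2) = 4 * 2 ^ j := by ring
  omega

lemma V_T_three_lt {Q : ℝ} (hQ : 1 < Q) (h1 : V Q (T 1) = 1) {j r : ℕ} (hr : 1 ≤ r)
    (hrN : r ≤ 2 ^ j) : V Q (T (3 * 2 ^ j + r)) < V Q (T r) :=
  V_gt_of_Lt hQ (T_dig _) (UU_T hQ h1 hr) (T_three_lt hrN)

/-- For an index outside `S ∪ {1}` the recursion by `n ↦ n - 3N` ends in `Wit_base` or in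
`Wit_one`. -/
lemma exists_Wit {Q : ℝ} (hQ : 1 < Q) (h1 : V Q (T 1) = 1) (n : ℕ) (hn : 1 ≤ n) (hn1 : n ≠ 1)
    (hS : ¬ memS n) : ∃ y, V Q (T n) < y ∧ Wit Q y n := by
  induction n using Nat.strong_induction_on with
  | _ n ih =>
    have hn5 : 5 ≤ n := by
      by_contra! hlt
      rcases (show n = 2 ∨ n = 3 ∨ n = 4 by omega) with rfl | rfl | rfl
      · exact hS .two
      · exact hS .three
      · exact hS .four
    have ha : 2 ^ Nat.log 2 (n - 1) ≤ n - 1 := Nat.pow_log_le_self 2 (by omega)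
    have hb : n - 1 < 2 ^ (Nat.log 2 (n - 1) + 1) := Nat.lt_pow_succ_log_self (by norm_num) _
    have hk : 2 ≤ Nat.log 2 (n - 1) := Nat.le_log_of_pow_le (by norm_num) (by omega)
    obtain ⟨k, hk'⟩ : ∃ k, Nat.log 2 (n - 1) = k + 2 := ⟨Nat.log 2 (n - 1) - 2, by omega⟩
    rw [hk'] at ha hb
    have e1 : 2 ^ (k + 2) = 2 * 2 ^ (k + 1) := by ring
    have e2 : 2 ^ (k + 2 + 1) = 4 * 2 ^ (k + 1) := by ring
    have hstep := memS.step (k + 2) n (by omega) (by omega) (by omega)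
    rw [show k + 2 - 1 = k + 1 by omega] at hstep
    rcases Nat.lt_or_ge (3 * 2 ^ (k + 1)) n with h3 | h3
    · obtain ⟨r, rfl⟩ : ∃ r, n = 3 * 2 ^ (k + 1) + r := ⟨n - 3 * 2 ^ (k + 1), by omega⟩
      rw [Nat.add_sub_cancel_left] at hstep
      have hr1 : 1 ≤ r := by omega
      have hlt := V_T_three_lt hQ h1 hr1 (show r ≤ 2 ^ (k + 1) by omega)
      by_cases hr : r = 1
      · subst hr
        exact ⟨1, by rwa [h1] at hlt, (Wit_one hQ h1).step (by omega) le_rfl (by omega)⟩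
      · obtain ⟨y, hy, hW⟩ := ih r (by omega) hr1 hr fun hr => hS (hstep h3 hr)
        exact ⟨y, hlt.trans hy, hW.step (by omega) hr1 (by omega)⟩
    · obtain ⟨r, rfl⟩ : ∃ r, n = 2 * 2 ^ (k + 1) + r := ⟨n - 2 * 2 ^ (k + 1), by omega⟩
      exact Wit_base hQ h1 (by omega) (by omega)

/-- By the intermediate value theorem a witness yields a base below `q_KL` with a unique expansion
of `x_n`. -/
lemma Wit.exists_base {Q y : ℝ} (hQ : 1 < Q) (h1 : V Q (T 1) = 1) {n : ℕ} (hn : 1 ≤ n)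
    (hy : V Q (T n) < y) (h : Wit Q y n) :
    ∃ q, 1 < q ∧ q < Q ∧ ∃ d, UU q d ∧ V q d = V Q (T n) := by
  obtain ⟨q0, d, ha, hb, hU, hV, p, hp, -⟩ := h
  have hd : Dig d := (hU ((q0 + Q) / 2) (by linarith) (by linarith)).1
  have hlt : V Q d < V Q (T n) := V_gt_of_Lt hQ hd (UU_T hQ h1 hn) ⟨p, hp⟩
  obtain ⟨q, ⟨hq1, hq2⟩, hq⟩ := intermediate_value_Icc' hb.le (V_cont (q' := Q) ha hd)
    ⟨hlt.le, (hy.trans_le hV).le⟩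
  simp only at hq
  have hq1' : q0 < q := lt_of_le_of_ne hq1 (by rintro rfl; linarith)
  have hq2' : q < Q := lt_of_le_of_ne hq2 (by rintro rfl; linarith)
  exact ⟨q, by linarith, hq2', d, hU q hq1' hq2', hq⟩

lemma memS_two_mul_four_pow (i : ℕ) : memS (2 * 4 ^ i) := by
  induction i with
  | zero => exact memS.two
  | succ i ih =>
    have e : 2 ^ (2 * i + 1) = 2 * 4 ^ i := by rw [pow_succ, pow_mul]; norm_num; ring
    have e2 : 2 ^ (2 * i + 2) = 2 * (2 * 4 ^ i) := by rw [pow_succ, e]; ring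
    have e3 : 2 ^ (2 * i + 2 + 1) = 4 * (2 * 4 ^ i) := by rw [pow_succ, e2]; ring
    have e4 : 2 * 4 ^ (i + 1) = 4 * (2 * 4 ^ i) := by ring
    have hpos : 0 < 4 ^ i := by positivity
    refine memS.step (2 * i + 2) _ (by omega) (by omega) (by omega) ?_ ?_
    · rw [show 2 * i + 2 - 1 = 2 * i + 1 by omega, e]; omega
    · rw [show 2 * i + 2 - 1 = 2 * i + 1 by omega, e, e4,
        show 4 * (2 * 4 ^ i) - 3 * (2 * 4 ^ i) = 2 * 4 ^ i by omega]
      exact ih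

/-! ### The function `q_s` at the tails of the Thue–Morse sequence -/

lemma mem_UnivSet {Q : ℝ} (hQ : 1 < Q) (hQ2 : Q ≤ 2) (h1 : V Q (T 1) = 1) {n : ℕ} (hn : 1 ≤ n) :
    Q ∈ UnivSet (V Q (T n)) :=
  ⟨⟨hQ, hQ2⟩, (existsUnique_iff hQ hQ2 _).2 ⟨T n, UU_T hQ h1 hn, rfl⟩⟩

lemma qs_eq {Q : ℝ} (hQ : 1 < Q) (hQ2 : Q ≤ 2) (h1 : V Q (T 1) = 1) {n : ℕ}
    (hn : memS n ∨ n = 1) : qs (V Q (T n)) = Q := by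
  have hn1 : 1 ≤ n := by
    rcases hn with h | h
    · have := memS_two_le h; omega
    · omega
  refine IsLeast.csInf_eq ⟨mem_UnivSet hQ hQ2 h1 hn1, ?_⟩
  rintro q ⟨⟨hq, hq2⟩, hex⟩
  by_contra! hlt
  obtain ⟨d, hU, hd⟩ := (existsUnique_iff hq hq2 _).1 hex
  exact no_smaller hQ h1 hn hq hlt hU hd

lemma qs_lt {Q : ℝ} (hQ : 1 < Q) (hQ2 : Q ≤ 2) (h1 : V Q (T 1) = 1) {n : ℕ} (hn : 1 ≤ n)
    (hS : ¬ (memS n ∨ n = 1)) : qs (V Q (T n)) < Q := by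
  push Not at hS
  obtain ⟨y, hy, hW⟩ := exists_Wit hQ h1 n hn hS.2 hS.1
  obtain ⟨q, hq, hqQ, hd⟩ := hW.exists_base hQ h1 hn hy
  refine lt_of_le_of_lt (csInf_le ⟨1, fun q h => h.1.1.le⟩ ?_) hqQ
  exact ⟨⟨hq, by linarith⟩, (existsUnique_iff hq (by linarith) _).2 hd⟩

lemma V_T_injective {Q : ℝ} (hQ : 1 < Q) (h1 : V Q (T 1) = 1) :
    Function.Injective fun i : ℕ => V Q (T (2 * 4 ^ i)) := by
  refine (strictAnti_nat_of_succ_lt fun i => ?_).injective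
  have e : 2 ^ (2 * i + 1) = 2 * 4 ^ i := by rw [pow_succ, pow_mul]; norm_num; ring
  have hpos : 0 < 4 ^ i := by positivity
  have := V_T_three_lt hQ h1 (j := 2 * i + 1) (r := 2 * 4 ^ i) (by omega) e.ge
  rwa [e, show 3 * (2 * 4 ^ i) + 2 * 4 ^ i = 2 * 4 ^ (i + 1) by ring] at this

end UExp

/-- `q_s(x_n) = q_KL` iff `n ∈ S ∪ {1}`; in that case
`q_KL ∈ 𝒰(x_n)`, so `q_KL = min 𝒰(x_n)`.  In particular there are infinitely
many `x > 0` with `q_s(x) = min 𝒰(x) = q_KL`. -/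
theorem qs_xn_eq_qKL_iff (qKL : ℝ) (hKL : qKL ∈ Set.Ioo (1 : ℝ) 2)
    (hKLsum : ∑' i : ℕ, (tm (i + 1) : ℝ) / qKL ^ (i + 1) = 1) :
    (∀ n : ℕ, 1 ≤ n →
      ((qs (∑' i : ℕ, (tm (n + i) : ℝ) / qKL ^ (i + 1)) = qKL) ↔ (memS n ∨ n = 1)) ∧
      ((memS n ∨ n = 1) →
        qKL ∈ UnivSet (∑' i : ℕ, (tm (n + i) : ℝ) / qKL ^ (i + 1)))) ∧
    {x : ℝ | 0 < x ∧ qs x = qKL ∧ qKL ∈ UnivSet x}.Infinite := by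
  have hQ := hKL.1
  have hQ2 := hKL.2.le
  have h1 : UExp.V qKL (UExp.T 1) = 1 := by
    rw [← hKLsum]
    exact tsum_congr fun i => by rw [UExp.T, add_comm 1 i]
  have hx : ∀ n : ℕ, ∑' i : ℕ, (tm (n + i) : ℝ) / qKL ^ (i + 1) = UExp.V qKL (UExp.T n) :=
    fun n => rfl
  simp only [hx]
  refine ⟨fun n hn => ⟨⟨fun h => ?_, UExp.qs_eq hQ hQ2 h1⟩,
    fun _ => UExp.mem_UnivSet hQ hQ2 h1 hn⟩, ?_⟩
  · by_contra hS
    exact (UExp.qs_lt hQ hQ2 h1 hn hS).ne h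
  · refine Set.infinite_of_injective_forall_mem (UExp.V_T_injective hQ h1) fun i => ?_
    have hS := UExp.memS_two_mul_four_pow i
    exact ⟨UExp.V_T_pos hQ _, UExp.qs_eq hQ hQ2 h1 (Or.inl hS),
      UExp.mem_UnivSet hQ hQ2 h1 (by have := UExp.memS_two_le hS; omega)⟩
end
end

section
/- The level set L(q_KL) = {x > 0 : q_s(x) = q_KL} has infinitely many right accumulation points belonging to L(q_KL) (i.e. infinitely many x ∈ L(q_KL) that are limits of strictly decreasing sequences of points of L(q_KL)), and also infinitely many left accumulation points belonging to L(q_KL) (i.e. infinitely many x ∈ L(q_KL) that are limits of strictly increasing sequences of points of L(q_KL)). -/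
open Filter Set

noncomputable section

/-!
Write `q = q_KL`. For a sequence `a_0 < a_1 < ⋯` with `a_0` large and all gaps at least `2`, let
`x_a` be the number with the expansion `1 C_{a_0} C_{a_1} ⋯` in base `q`, where
`C_k = τ_{2^k+1} ⋯ τ_{2^{k+1}}` is a Thue–Morse block. Each `x_a` lies in `L(q)`.

An expansion is unique exactly when each of its digits is forced (`mem_univSet_iff`): the tail
behind a digit `0` is worth less than `1`, and the tail behind a digit `1` is worth more than
`1/(q-1) - 1`. In base `q` the word `C_k` followed by a tail of value `y ≥ 0` is worth
`1/(q-1) - 1` plus a positive quantity of order `q^{-2^k}` (`ev_C_sub`), and the recursive structure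
of the Thue–Morse words then shows that all digits of `1 C_{a_0} C_{a_1} ⋯` are forced (`good_W`,
`univ_dd`). So `q ∈ 𝒰(x_a)`.

Suppose that `x_a` has a unique expansion `e` in a base `r < q`, and consider the first position
where `e` differs from `1 C_{a_0} C_{a_1} ⋯` (`no_smaller_base`).
* If `e` has the digit `1` there, then, as the other digit `0` is forced in base `q`, the value of
  `e` in base `q` exceeds `x_a`, though it is at most the value of `e` in base `r`, that is, `x_a`.
* If `e` has the digit `0` there and the position is the first one, then `x_a < 1/r`, which is too
  small.
* If `e` has the digit `0` there and the position lies in the block `C_{a_i}`, then the last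
  digit before this block is a forced `1`, so the tail of `e` from there on, and a fortiori `C_{a_i}`,
  is worth more than `1/(r-1) - 1` in base `r`. This makes `q - r` at most of order `q^{-2·2^{a_i}}`.
  But `1 C_{a_0} ⋯ C_{a_i}` is worth more than `x_a` in base `r`, and this makes `q - r` at least of
  order `q^{-J}`, where `J`, the length of this word, is at most `3/2 · 2^{a_i}`. As `a_0` is large,
  this is impossible (`ev_C_le`).

Finally, `x_a` decreases when an entry `a_j` is increased, and depends little on `a_j` for large `j`.
Changing a single entry of `a` by `-1` or by `+1` thus gives points of `L(q)` that approach `x_a`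
from the right or from the left (`right_acc`, `left_acc`), and there are infinitely many `x_a`.
-/

/-! ### Words and their values in a base -/

namespace QKL

/-- The real value of a binary digit. -/
def dg (b : Bool) : ℝ := if b then 1 else 0

/-- The sum `∑_{i ≥ 1} q^{-i} = 1/(q-1)`, the largest number having a `q`-expansion. -/
def sm (q : ℝ) : ℝ := 1 / (q - 1)

/-- `ev q w y` is the value in base `q` of the finite word `w` followed by a tail of value `y`. -/
def ev (q : ℝ) : List Bool → ℝ → ℝ
  | [], y => y
  | b :: w, y => (dg b + ev q w y) / q

/-- The condition on the value `v` of the tail behind a digit `b` which forces that digit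
in base `q`: `v < 1` if `b = 0`, and `v > 1/(q-1) - 1` if `b = 1`. -/
def Forced (q : ℝ) : Bool → ℝ → Prop
  | false, v => v < 1
  | true, v => sm q - 1 < v

/-- Every digit of the word `w`, followed by a tail of value `y`, is forced in base `q`. -/
def Good (q : ℝ) : List Bool → ℝ → Prop
  | [], _ => True
  | b :: w, y => Forced q b (ev q w y) ∧ Good q w y

/-- The digitwise complement of a word. -/
def comp (w : List Bool) : List Bool := w.map not

@[simp] lemma dg_true : dg true = 1 := rfl
@[simp] lemma dg_false : dg false = 0 := rfl
@[simp] lemma comp_nil : comp [] = [] := rfl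
@[simp] lemma comp_cons (b : Bool) (w : List Bool) : comp (b :: w) = (!b) :: comp w := rfl
@[simp] lemma comp_append (u w : List Bool) : comp (u ++ w) = comp u ++ comp w :=
  List.map_append
@[simp] lemma comp_length (w : List Bool) : (comp w).length = w.length := List.length_map _
@[simp] lemma comp_comp (w : List Bool) : comp (comp w) = w := by
  induction w with
  | nil => rfl
  | cons b w ih => simp [ih]

lemma dg_nonneg (b : Bool) : 0 ≤ dg b := by cases b <;> simp
lemma dg_le_one (b : Bool) : dg b ≤ 1 := by cases b <;> simp
lemma dg_not (b : Bool) : dg (!b) = 1 - dg b := by cases b <;> simp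

lemma sm_pos {q : ℝ} (hq : 1 < q) : 0 < sm q := by
  unfold sm; have : 0 < q - 1 := by linarith
  positivity

lemma sm_eq {q : ℝ} (hq : 1 < q) : q * sm q = 1 + sm q := by
  have : q - 1 ≠ 0 := by linarith
  unfold sm; field_simp; ring

lemma one_le_sm {q : ℝ} (hq : 1 < q) (hq2 : q ≤ 2) : 1 ≤ sm q := by
  unfold sm; rw [le_div_iff₀ (by linarith)]; linarith

lemma sm_lt {q r : ℝ} (hq : 1 < q) (h : q < r) : sm r < sm q := by
  unfold sm; exact one_div_lt_one_div_of_lt (by linarith) (by linarith)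

lemma ev_append (q : ℝ) (u w : List Bool) (y : ℝ) : ev q (u ++ w) y = ev q u (ev q w y) := by
  induction u with
  | nil => rfl
  | cons b u ih => simp [ev, ih]

lemma good_append (q : ℝ) (u w : List Bool) (y : ℝ) :
    Good q (u ++ w) y ↔ Good q u (ev q w y) ∧ Good q w y := by
  induction u with
  | nil => simp [Good]
  | cons b u ih => simp [Good, ih, ev_append, and_assoc]

/-- The value of a word is affine in the value of the tail. -/
lemma ev_sub {q : ℝ} (hq : 1 < q) (w : List Bool) (y z : ℝ) :
    ev q w y - ev q w z = (y - z) / q ^ w.length := by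
  have : q ≠ 0 := by linarith
  induction w with
  | nil => simp [ev]
  | cons b w ih =>
    have : ev q w y = ev q w z + (y - z) / q ^ w.length := by linarith
    simp only [ev, List.length_cons, this, pow_succ]
    field_simp; ring

lemma ev_lt_iff {q : ℝ} (hq : 1 < q) (w : List Bool) {y z : ℝ} :
    ev q w y < ev q w z ↔ y < z := by
  have h := ev_sub hq w z y
  have hp : 0 < q ^ w.length := by positivity
  constructor
  · intro hlt
    have : 0 < (z - y) / q ^ w.length := by linarith
    have := (div_pos_iff_of_pos_right hp).1 this
    linarith
  · intro hlt
    have : 0 < (z - y) / q ^ w.length := div_pos (by linarith) hp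
    linarith

lemma ev_inj {q : ℝ} (hq : 1 < q) (w : List Bool) {y z : ℝ} (h : ev q w y = ev q w z) :
    y = z := by
  rcases lt_trichotomy y z with h1 | h1 | h1
  · exact absurd h ((ev_lt_iff hq w).2 h1).ne
  · exact h1
  · exact absurd h ((ev_lt_iff hq w).2 h1).ne'

lemma ev_le_iff {q : ℝ} (hq : 1 < q) (w : List Bool) {y z : ℝ} :
    ev q w y ≤ ev q w z ↔ y ≤ z := by
  rw [← not_lt, ← not_lt, ev_lt_iff hq]

lemma ev_nonneg {q : ℝ} (hq : 1 < q) (w : List Bool) {y : ℝ} (hy : 0 ≤ y) : 0 ≤ ev q w y := by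
  induction w with
  | nil => simpa [ev]
  | cons b w ih =>
    have := dg_nonneg b
    simp only [ev]; positivity

/-- The value of a word decreases when the base increases. -/
lemma ev_anti {q r : ℝ} (hq : 1 < q) (hqr : q ≤ r) (w : List Bool) {y z : ℝ} (hz : 0 ≤ z)
    (hzy : z ≤ y) : ev r w z ≤ ev q w y := by
  induction w with
  | nil => simpa [ev]
  | cons b w ih =>
    have := dg_nonneg b
    have := ev_nonneg (hq.trans_le hqr) w hz
    simp only [ev]
    apply div_le_div₀ <;> linarith

lemma ev_comp {q : ℝ} (hq : 1 < q) (w : List Bool) (y : ℝ) :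
    ev q (comp w) (sm q - y) = sm q - ev q w y := by
  have : q ≠ 0 := by linarith
  induction w with
  | nil => simp [ev]
  | cons b w ih =>
    simp only [comp_cons, ev, ih, dg_not]
    rw [div_eq_iff this, sub_mul, div_mul_cancel₀ _ this]
    linarith [sm_eq hq]

lemma good_comp {q : ℝ} (hq : 1 < q) (w : List Bool) (y : ℝ) :
    Good q (comp w) (sm q - y) ↔ Good q w y := by
  induction w with
  | nil => simp [Good]
  | cons b w ih =>
    simp only [comp_cons, Good, ih, ev_comp hq]
    refine and_congr_left fun _ => ?_
    cases b <;> simp only [Forced, Bool.not_true, Bool.not_false] <;>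
      constructor <;> intro h <;> linarith

/-! ### Infinite sequences and uniqueness of expansions -/

/-- The value `∑ b_i q^{-i}` of an infinite binary sequence. -/
def val (q : ℝ) (b : ℕ → Bool) : ℝ := ∑' i : ℕ, dg (b i) / q ^ (i + 1)

/-- The sequence `b` with its first `n` digits removed. -/
def tl (b : ℕ → Bool) (n : ℕ) : ℕ → Bool := fun i => b (n + i)

/-- The first `n` digits of `b`. -/
def pre (b : ℕ → Bool) (n : ℕ) : List Bool := (List.range n).map b

@[simp] lemma pre_length (b : ℕ → Bool) (n : ℕ) : (pre b n).length = n := by simp [pre]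
lemma pre_succ (b : ℕ → Bool) (n : ℕ) : pre b (n + 1) = pre b n ++ [b n] := by
  simp [pre, List.range_succ]
lemma tl_tl (b : ℕ → Bool) (m n : ℕ) : tl (tl b m) n = tl b (m + n) := by
  funext i; simp [tl, add_assoc]
lemma pre_add (b : ℕ → Bool) (m n : ℕ) : pre b (m + n) = pre b m ++ pre (tl b m) n := by
  simp [pre, List.range_add, tl]
lemma pre_congr {b c : ℕ → Bool} {n : ℕ} (h : ∀ i < n, b i = c i) : pre b n = pre c n := by
  apply List.map_congr_left; intro i hi; exact h i (List.mem_range.1 hi)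

lemma hasSum_one {q : ℝ} (hq : 1 < q) : HasSum (fun i : ℕ => 1 / q ^ (i + 1)) (sm q) := by
  have h0 : 0 < q := by linarith
  have h := (hasSum_geometric_of_lt_one (r := 1 / q) (by positivity)
    ((div_lt_one h0).2 hq)).mul_left (1 / q)
  have h1 : (fun i : ℕ => 1 / q * (1 / q) ^ i) = fun i => 1 / q ^ (i + 1) := by
    funext i; rw [one_div_pow, pow_succ]; field_simp
  have h2 : 1 / q * (1 - 1 / q)⁻¹ = sm q := by
    have : q - 1 ≠ 0 := by linarith
    unfold sm; field_simp
  rwa [h1, h2] at h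

lemma summable_val {q : ℝ} (hq : 1 < q) (b : ℕ → Bool) :
    Summable (fun i : ℕ => dg (b i) / q ^ (i + 1)) := by
  refine Summable.of_nonneg_of_le (fun i => ?_) (fun i => ?_) (hasSum_one hq).summable
  · have := dg_nonneg (b i); positivity
  · have := dg_le_one (b i); gcongr

lemma val_nonneg {q : ℝ} (hq : 1 < q) (b : ℕ → Bool) : 0 ≤ val q b :=
  tsum_nonneg fun i => by have := dg_nonneg (b i); positivity

lemma val_le {q : ℝ} (hq : 1 < q) (b : ℕ → Bool) : val q b ≤ sm q := by
  rw [← (hasSum_one hq).tsum_eq]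
  refine (summable_val hq b).tsum_le_tsum (fun i => ?_) (hasSum_one hq).summable
  have := dg_le_one (b i); gcongr

lemma val_anti {q r : ℝ} (hq : 1 < q) (hqr : q ≤ r) (b : ℕ → Bool) : val r b ≤ val q b := by
  refine (summable_val (hq.trans_le hqr) b).tsum_le_tsum (fun i => ?_) (summable_val hq b)
  have := dg_nonneg (b i); gcongr

lemma val_lt {q r : ℝ} (hq : 1 < q) (hqr : q < r) {b : ℕ → Bool} {n : ℕ} (hn : b n = true) :
    val r b < val q b := by
  refine (summable_val (hq.trans hqr) b).tsum_lt_tsum (i := n) (fun i => ?_) ?_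
    (summable_val hq b)
  · have := dg_nonneg (b i); gcongr
  · rw [hn]; simp only [dg_true]
    exact one_div_lt_one_div_of_lt (by positivity)
      (pow_lt_pow_left₀ hqr (by linarith) (by omega))

lemma val_succ {q : ℝ} (hq : 1 < q) (b : ℕ → Bool) :
    val q b = (dg (b 0) + val q (tl b 1)) / q := by
  have : q ≠ 0 := by linarith
  unfold val
  rw [(summable_val hq b).tsum_eq_zero_add, add_div, ← tsum_div_const]
  congr 1
  · simp
  · congr 1; funext i; simp only [tl, add_comm 1 i]; rw [pow_succ, div_div]

lemma val_pre {q : ℝ} (hq : 1 < q) (b : ℕ → Bool) (n : ℕ) :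
    val q b = ev q (pre b n) (val q (tl b n)) := by
  induction n with
  | zero => simp [pre, ev, show tl b 0 = b from funext fun i => by simp [tl]]
  | succ n ih =>
    rw [ih, pre_succ, ev_append, val_succ hq (tl b n), tl_tl]; simp [ev, tl]

/-- All digits of the sequence `b` are forced in base `q`. -/
def Univ (q : ℝ) (b : ℕ → Bool) : Prop := ∀ n, Forced q (b n) (val q (tl b (n + 1)))

lemma good_pre {q : ℝ} (hq : 1 < q) (b : ℕ → Bool) (n : ℕ) :
    Good q (pre b n) (val q (tl b n)) ↔ ∀ m < n, Forced q (b m) (val q (tl b (m + 1))) := by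
  induction n with
  | zero => simp [pre, Good]
  | succ n ih =>
    rw [pre_succ, good_append, Nat.forall_lt_succ_right, ← ih]
    have : ev q [b n] (val q (tl b (n + 1))) = val q (tl b n) := by
      rw [val_succ hq (tl b n), tl_tl]; simp [ev, tl]
    rw [this]; simp [Good, ev]

/-- The remainders of `y` in the greedy algorithm: the next digit is `1` exactly when `q` times
the current remainder is at least `1`. -/
def rem (q y : ℝ) : ℕ → ℝ
  | 0 => y
  | n + 1 => if 1 ≤ q * rem q y n then q * rem q y n - 1 else q * rem q y n

/-- Every `y ∈ [0, 1/(q-1)]` has a `q`-expansion, by the greedy algorithm. -/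
lemma exists_val {q y : ℝ} (hq : 1 < q) (hq2 : q ≤ 2) (h0 : 0 ≤ y) (h1 : y ≤ sm q) :
    ∃ b : ℕ → Bool, val q b = y := by
  have hq0 : 0 < q := by linarith
  have hb : ∀ n, 0 ≤ rem q y n ∧ rem q y n ≤ sm q := by
    intro n
    induction n with
    | zero => exact ⟨h0, h1⟩
    | succ n ih =>
      simp only [rem]
      have := one_le_sm hq hq2
      have := sm_eq hq
      split_ifs with h
      · exact ⟨by linarith, by nlinarith [ih.2]⟩
      · exact ⟨mul_nonneg hq0.le ih.1, by linarith⟩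
  refine ⟨fun n => decide (1 ≤ q * rem q y n), ?_⟩
  set b : ℕ → Bool := fun n => decide (1 ≤ q * rem q y n) with hbdef
  have hstep : ∀ n, (dg (b n) + rem q y (n + 1)) / q = rem q y n := by
    intro n
    rw [div_eq_iff hq0.ne']
    by_cases h : 1 ≤ q * rem q y n <;> simp [hbdef, h, rem, mul_comm]
  have hev : ∀ n, y = ev q (pre b n) (rem q y n) := by
    intro n
    induction n with
    | zero => simp [pre, ev, rem]
    | succ n ih => rw [pre_succ, ev_append]; simp only [ev]; rw [hstep, ← ih]
  have hdiff : ∀ n, |val q b - y| ≤ sm q * (1 / q) ^ n := by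
    intro n
    have h2 := ev_sub hq (pre b n) (val q (tl b n)) (rem q y n)
    rw [← hev, ← val_pre hq] at h2
    rw [h2, pre_length, abs_div, abs_of_pos (pow_pos hq0 n), one_div_pow, mul_one_div]
    gcongr
    rw [abs_le]
    have := val_nonneg hq (tl b n)
    have := val_le hq (tl b n)
    constructor <;> linarith [(hb n).1, (hb n).2]
  have hlim : Tendsto (fun n : ℕ => sm q * (1 / q) ^ n) atTop (nhds 0) := by
    simpa using (tendsto_pow_atTop_nhds_zero_of_lt_one (r := 1 / q) (by positivity)
      ((div_lt_one hq0).2 hq)).const_mul (sm q)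
  have := ge_of_tendsto' hlim hdiff
  exact sub_eq_zero.1 (abs_eq_zero.1 (le_antisymm this (abs_nonneg _)))

/-- The numerical digit sequence attached to a Boolean one. -/
def toDig (b : ℕ → Bool) : ℕ → ℕ := fun i => if b i then 1 else 0

lemma isExpansion_toDig (q x : ℝ) (b : ℕ → Bool) :
    IsExpansion q x (toDig b) ↔ x = val q b := by
  have : ∀ i, ((toDig b i : ℕ) : ℝ) = dg (b i) := by
    intro i; unfold toDig dg; split_ifs <;> simp
  unfold IsExpansion val
  simp only [this]
  refine ⟨fun h => h.2, fun h => ⟨fun i => ?_, h⟩⟩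
  unfold toDig; split_ifs <;> simp

lemma exists_toDig {q x : ℝ} {d : ℕ → ℕ} (h : IsExpansion q x d) : ∃ b, d = toDig b := by
  refine ⟨fun i => decide (d i = 1), ?_⟩
  funext i
  have := h.1 i
  unfold toDig
  by_cases h1 : d i = 1
  · simp [h1]
  · simp [h1]; omega

lemma toDig_inj {b c : ℕ → Bool} (h : toDig b = toDig c) : b = c := by
  funext i
  have := congrFun h i
  unfold toDig at this
  cases hb : b i <;> cases hc : c i <;> simp_all

/-- Two distinct sequences agree up to the first index where they differ. -/
lemma exists_first_diff {b c : ℕ → Bool} (h : b ≠ c) :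
    ∃ p, b p ≠ c p ∧ ∀ i < p, b i = c i := by
  classical
  have h' : ∃ p, b p ≠ c p := by
    by_contra hcon; push Not at hcon; exact h (funext hcon)
  refine ⟨Nat.find h', Nat.find_spec h', fun i hi => ?_⟩
  exact not_not.1 (Nat.find_min h' hi)

/-- A sequence all of whose digits are forced is the only expansion of its value. -/
lemma unique_of_univ {q : ℝ} (hq : 1 < q) {b c : ℕ → Bool} (hb : Univ q b)
    (h : val q b = val q c) : c = b := by
  by_contra hne
  obtain ⟨p, hp, hlt⟩ := exists_first_diff hne
  rw [val_pre hq b p, val_pre hq c p, pre_congr hlt] at h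
  have h2 := ev_inj hq _ h
  rw [val_succ hq (tl b p), val_succ hq (tl c p), tl_tl, tl_tl,
    div_left_inj' (by linarith)] at h2
  have h3 := hb p
  have h4 := val_nonneg hq (tl c (p + 1))
  have h5 := val_le hq (tl c (p + 1))
  simp only [tl, add_zero] at h2
  cases h6 : b p <;> cases h7 : c p <;> rw [h6] at h2 h3 hp <;> rw [h7] at h2 hp <;>
    simp only [Forced, dg_true, dg_false] at h2 h3 <;> first | exact hp rfl | linarith

/-- Conversely, all digits of a unique expansion are forced: otherwise the digit can be
switched and the tail replaced by another expansion. -/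
lemma univ_of_unique {q : ℝ} (hq : 1 < q) (hq2 : q ≤ 2) {b : ℕ → Bool}
    (hb : ∀ c, val q c = val q b → c = b) : Univ q b := by
  intro n
  by_contra hcon
  have hs := one_le_sm hq hq2
  have h0 := val_nonneg hq (tl b (n + 1))
  have h1 := val_le hq (tl b (n + 1))
  obtain ⟨c, hc⟩ : ∃ c, val q c = dg (b n) + val q (tl b (n + 1)) - dg (!b n) := by
    apply exists_val hq hq2
    · cases h : b n <;> simp [h, Forced] at hcon ⊢ <;> linarith
    · cases h : b n <;> simp [h, Forced] at hcon ⊢ <;> linarith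
  let e : ℕ → Bool := fun i => if i < n then b i else if i = n then !b n else c (i - (n + 1))
  have he1 : pre e n = pre b n := pre_congr fun i hi => by simp [e, hi]
  have he2 : e n = !b n := by simp [e]
  have he3 : tl e (n + 1) = c := by
    funext i
    have h1 : ¬ (n + 1 + i < n) := by omega
    have h2 : ¬ (n + 1 + i = n) := by omega
    have h3 : n + 1 + i - (n + 1) = i := by omega
    simp only [tl, e, h1, h2, h3, if_false]
  have : val q e = val q b := by
    rw [val_pre hq e (n + 1), val_pre hq b (n + 1), pre_succ, pre_succ, he1, he2, he3,
      ev_append, ev_append, hc]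
    simp [ev]
  have h2 := congrFun (hb e this) n
  rw [he2] at h2
  cases h3 : b n <;> simp [h3] at h2

lemma mem_univSet_iff {q x : ℝ} :
    q ∈ UnivSet x ↔ (1 < q ∧ q ≤ 2) ∧ ∃ b, x = val q b ∧ Univ q b := by
  unfold UnivSet
  simp only [Set.mem_ofPred_eq, Set.mem_Ioc]
  refine and_congr_right fun ⟨hq, hq2⟩ => ⟨?_, ?_⟩
  · rintro ⟨d, hd, huniq⟩
    obtain ⟨b, rfl⟩ := exists_toDig hd
    have hx := (isExpansion_toDig q x b).1 hd
    refine ⟨b, hx, univ_of_unique hq hq2 fun c hc => toDig_inj (huniq _ ?_)⟩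
    exact (isExpansion_toDig q x c).2 (by rw [hx, hc])
  · rintro ⟨b, hx, hb⟩
    refine ⟨toDig b, (isExpansion_toDig q x b).2 hx, fun d hd => ?_⟩
    obtain ⟨c, rfl⟩ := exists_toDig hd
    rw [unique_of_univ hq hb (hx.symm.trans ((isExpansion_toDig q x c).1 hd))]

/-! ### The Thue–Morse sequence -/

lemma tm_two_mul (n : ℕ) : tm (2 * n) = tm n := by
  unfold tm
  rcases Nat.eq_zero_or_pos n with rfl | hn
  · simp
  · have := Nat.digits_add_two_add_one 0 (2 * n - 1)
    rw [show 2 * n - 1 + 1 = 2 * n by omega] at this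
    rw [this]; simp

lemma tm_two_mul_add_one (n : ℕ) : tm (2 * n + 1) = 1 - tm n := by
  unfold tm
  have := Nat.digits_add_two_add_one 0 (2 * n)
  rw [this]
  simp only [List.sum_cons]
  have h : (2 * n + 1) / (0 + 2) = n := by omega
  rw [h]; simp only [zero_add]
  omega

lemma tm_le_one (n : ℕ) : tm n ≤ 1 := by unfold tm; omega

lemma tm_zero : tm 0 = 0 := by simp [tm]

lemma tm_pow_add (k : ℕ) : ∀ i < 2 ^ k, tm (2 ^ k + i) = 1 - tm i := by
  induction k with
  | zero =>
    intro i hi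
    have : i = 0 := by simpa using hi
    subst this
    have := tm_two_mul_add_one 0
    simpa using this
  | succ k ih =>
    intro i hi
    rw [pow_succ] at hi
    rcases Nat.even_or_odd' i with ⟨j, rfl | rfl⟩
    · rw [show 2 ^ (k + 1) + 2 * j = 2 * (2 ^ k + j) by ring, tm_two_mul, tm_two_mul,
        ih j (by omega)]
    · rw [show 2 ^ (k + 1) + (2 * j + 1) = 2 * (2 ^ k + j) + 1 by ring, tm_two_mul_add_one,
        tm_two_mul_add_one, ih j (by omega)]

lemma tm_pow (k : ℕ) : tm (2 ^ k) = 1 := by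
  have := tm_pow_add k 0 (by positivity)
  simpa [tm_zero] using this

/-- The Thue–Morse sequence `τ_1 τ_2 ⋯` as a Boolean sequence. -/
def tmB : ℕ → Bool := fun i => decide (tm (i + 1) = 1)

/-- The pair of words `W_k = τ_1 ⋯ τ_{2^k}` and `C_k = τ_{2^k+1} ⋯ τ_{2^{k+1}}`, given by
`W_{k+1} = W_k C_k` and `C_{k+1} = W̅_k W_k`. -/
def WC : ℕ → List Bool × List Bool
  | 0 => ([true], [true])
  | k + 1 => ((WC k).1 ++ (WC k).2, comp (WC k).1 ++ (WC k).1)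

/-- The word `W_k = τ_1 ⋯ τ_{2^k}`. -/
def W (k : ℕ) : List Bool := (WC k).1

/-- The word `C_k = τ_{2^k+1} ⋯ τ_{2^{k+1}}`, which is the complement of `W_k` with its last
digit changed from `0` to `1`. -/
def C (k : ℕ) : List Bool := (WC k).2

lemma W_succ (k : ℕ) : W (k + 1) = W k ++ C k := rfl
lemma C_succ (k : ℕ) : C (k + 1) = comp (W k) ++ W k := rfl

lemma length_WC (k : ℕ) : (W k).length = 2 ^ k ∧ (C k).length = 2 ^ k := by
  induction k with
  | zero => exact ⟨rfl, rfl⟩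
  | succ k ih =>
    rw [W_succ, C_succ]
    simp only [List.length_append, comp_length, ih.1, ih.2, pow_succ]
    omega

lemma W_head (k : ℕ) : ∃ Z, W k = true :: Z := by
  induction k with
  | zero => exact ⟨[], rfl⟩
  | succ k ih => obtain ⟨Z, hZ⟩ := ih; exact ⟨Z ++ C k, by rw [W_succ, hZ]; rfl⟩

lemma WC_last (k : ℕ) : (∃ Z, W k = Z ++ [true]) ∧ ∃ Z, C k = Z ++ [true] := by
  induction k with
  | zero => exact ⟨⟨[], rfl⟩, ⟨[], rfl⟩⟩
  | succ k ih =>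
    obtain ⟨⟨Z, hZ⟩, ⟨Y, hY⟩⟩ := ih
    exact ⟨⟨W k ++ Y, by rw [W_succ, hY, List.append_assoc]⟩,
      ⟨comp (W k) ++ Z, by rw [C_succ, hZ, List.append_assoc]⟩⟩

lemma pre_tmB (k : ℕ) : pre tmB (2 ^ k) = W k ∧ pre (tl tmB (2 ^ k)) (2 ^ k) = C k := by
  have h2 : ∀ k, 2 ^ (k + 1) = 2 ^ k + 2 ^ k := fun k => by ring
  induction k with
  | zero =>
    have h1 : tm 1 = 1 := tm_pow 0
    have h2 : tm 2 = 1 := tm_pow 1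
    simp [pre, tl, tmB, W, C, WC, h1, h2]
  | succ k ih =>
    constructor
    · rw [h2, pre_add, ih.1, ih.2, W_succ]
    · rw [C_succ, ← ih.1]
      nth_rw 2 [h2]
      rw [pre_add, tl_tl]
      congr 1
      · simp only [pre, comp, List.map_map]
        apply List.map_congr_left
        intro i hi
        have hi := List.mem_range.1 hi
        have h3 := tm_pow_add (k + 1) (i + 1) (by rw [h2]; omega)
        have h4 := tm_le_one (i + 1)
        simp only [tl, tmB, Function.comp_apply, add_assoc, h3]
        rcases Nat.le_one_iff_eq_zero_or_eq_one.1 h4 with h5 | h5 <;> simp [h5]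
      · apply pre_congr
        intro i hi
        simp only [tl, tmB, add_assoc]
        by_cases hi2 : i + 1 = 2 ^ k
        · have : 2 ^ (k + 1) + (2 ^ k + (i + 1)) = 2 ^ (k + 2) := by rw [hi2]; ring
          rw [this, hi2, tm_pow, tm_pow]
        · have h3 := tm_pow_add (k + 1) (2 ^ k + (i + 1)) (by rw [h2]; omega)
          have h5 := tm_pow_add k (i + 1) (by omega)
          have h4 := tm_le_one (i + 1)
          rw [h3, h5, Nat.sub_sub_self h4]

/-! ### Thue–Morse tails in the Komornik–Loreti base -/

/-- The value of the Thue–Morse tail `τ_{2^k+1} τ_{2^k+2} ⋯`. -/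
def tt (q : ℝ) (k : ℕ) : ℝ := val q (tl tmB (2 ^ k))

/-- `W_k` and the complement of `C_k` differ only in the last digit, `1` against `0`. -/
lemma ev_W_eq {q : ℝ} (hq : 1 < q) (k : ℕ) (y : ℝ) :
    ev q (W k) y = ev q (comp (C k)) (y + 1) := by
  have : q ≠ 0 := by linarith
  induction k generalizing y with
  | zero => simp [W, C, WC, ev, add_comm]
  | succ k ih =>
    have h := ih (sm q - y - 1)
    have h1 := ev_comp hq (C k) y
    have h2 := ev_comp hq (W k) (sm q - y - 1)
    rw [W_succ, C_succ, comp_append, comp_comp, ev_append, ev_append]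
    congr 1
    rw [show sm q - y - 1 + 1 = sm q - y by ring] at h
    rw [show sm q - (sm q - y - 1) = y + 1 by ring] at h2
    linarith

lemma ev_C_eq {q : ℝ} (hq : 1 < q) (k : ℕ) (y : ℝ) :
    ev q (C k) y = ev q (comp (W k)) (y + 1) := by
  have h1 := ev_W_eq hq k (sm q - y - 1)
  have h2 := ev_comp hq (C k) y
  have h3 := ev_comp hq (W k) (sm q - y - 1)
  rw [show sm q - y - 1 + 1 = sm q - y by ring] at h1
  rw [show sm q - (sm q - y - 1) = y + 1 by ring] at h3
  linarith

section KL

variable {q : ℝ}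

lemma ev_W_tt (hq : 1 < q) (h1 : val q tmB = 1) (k : ℕ) : ev q (W k) (tt q k) = 1 := by
  rw [← (pre_tmB k).1, tt, ← val_pre hq, h1]

lemma tt_eq (hq : 1 < q) (h1 : val q tmB = 1) (k : ℕ) :
    tt q k = ev q (C k) (tt q (k + 1)) := by
  apply ev_inj hq (W k)
  rw [← ev_append, ← W_succ, ev_W_tt hq h1, ev_W_tt hq h1]

/-- Since `1/(q-1) - 1` is the value of the complemented Thue–Morse sequence, which agrees with
`C_k` up to one digit, the distance from `C_k y` to it has a closed form. -/
lemma ev_C_sub (hq : 1 < q) (h1 : val q tmB = 1) (k : ℕ) (y : ℝ) :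
    ev q (C k) y - (sm q - 1) = (y + (tt q k - (sm q - 1))) / q ^ (2 ^ k) := by
  have h2 := ev_comp hq (W k) (tt q k)
  rw [ev_W_tt hq h1] at h2
  have h3 := ev_sub hq (comp (W k)) (y + 1) (sm q - tt q k)
  rw [comp_length, (length_WC k).1, h2] at h3
  rw [ev_C_eq hq, h3]
  congr 1; ring

lemma tt_sub (hq : 1 < q) (h1 : val q tmB = 1) (k : ℕ) :
    (tt q k - (sm q - 1)) * (q ^ (2 ^ k) - 1) = tt q (k + 1) := by
  have h := ev_C_sub hq h1 k (tt q (k + 1))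
  rw [← tt_eq hq h1, eq_div_iff (by positivity)] at h
  linarith

lemma sm_sub_pos (hq : 1 < q) (hhi : q ≤ 1.85) : 0 < sm q - 1 := by
  have := sm_eq hq
  have := sm_pos hq
  nlinarith

lemma lt_tt (hq : 1 < q) (hhi : q ≤ 1.85) (h1 : val q tmB = 1) (k : ℕ) :
    sm q - 1 < tt q k := by
  -- by `tt_sub`, a lower bound for one tail improves the bound for the preceding one
  have hp : ∀ k, 0 < q ^ (2 ^ k) - 1 := fun k => by
    have := one_lt_pow₀ hq (show 2 ^ k ≠ 0 by positivity)
    linarith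
  have hge : ∀ k, sm q - 1 ≤ tt q k := fun k => by
    have h := tt_sub hq h1 k
    have h0 : 0 ≤ tt q (k + 1) := val_nonneg hq _
    rw [← h] at h0
    linarith [nonneg_of_mul_nonneg_left h0 (hp k)]
  have h := tt_sub hq h1 k
  have h0 : 0 < tt q (k + 1) := (sm_sub_pos hq hhi).trans_le (hge _)
  rw [← h] at h0
  linarith [pos_of_mul_pos_left h0 (hp k).le]

lemma lt_ev_C (hq : 1 < q) (hhi : q ≤ 1.85) (h1 : val q tmB = 1) (k : ℕ) {y : ℝ}
    (hy : 0 ≤ y) : sm q - 1 < ev q (C k) y := by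
  have h := ev_C_sub hq h1 k y
  have := lt_tt hq hhi h1 k
  have : 0 < (y + (tt q k - (sm q - 1))) / q ^ (2 ^ k) := div_pos (by linarith) (by positivity)
  linarith

/-- By `tt_sub`, the excess of the `k`-th tail over `1/(q-1) - 1` is of order `q^{-2^k}`, which
drops by a large factor when `k` increases by two. -/
lemma tt_add_two_lt (hlo : 1.5 ≤ q) (hhi : q ≤ 1.85) (h1 : val q tmB = 1) (k : ℕ) :
    tt q (k + 2) < tt q k := by
  have hq : 1 < q := by linarith
  have ha := tt_sub hq h1 (k + 2)
  have hb := tt_sub hq h1 k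
  have hle : tt q (k + 3) ≤ sm q := val_le hq _
  have hlt := lt_tt hq hhi h1 (k + 1)
  set A := q ^ (2 ^ k) with hA
  have hA4 : q ^ (2 ^ (k + 2)) = A ^ 4 := by rw [hA, ← pow_mul]; congr 1; ring
  have hqA : q ≤ A := by
    rw [hA]; exact le_self_pow₀ hq.le (by positivity)
  rw [hA4] at ha
  set u := tt q (k + 2) - (sm q - 1)
  set v := tt q k - (sm q - 1)
  have hs := sm_eq hq
  have hsp := sm_pos hq
  suffices u < v by simp only [u, v] at this; linarith
  by_contra hcon
  push Not at hcon
  have hA1 : 0 < A - 1 := by linarith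
  have hP : 8 ≤ (A + 1) * (A ^ 2 + 1) := by nlinarith [mul_self_nonneg (A - 1.5)]
  have h5 : (sm q - 1) * 8 ≤ sm q := by
    have hv : sm q - 1 < v * (A - 1) := by rw [hb]; exact hlt
    have hb0 := sm_sub_pos hq hhi
    have : (sm q - 1) * ((A + 1) * (A ^ 2 + 1)) ≤ sm q := by
      calc (sm q - 1) * ((A + 1) * (A ^ 2 + 1))
          ≤ (v * (A - 1)) * ((A + 1) * (A ^ 2 + 1)) := by gcongr
        _ ≤ (u * (A - 1)) * ((A + 1) * (A ^ 2 + 1)) := by gcongr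
        _ = u * (A ^ 4 - 1) := by ring
        _ ≤ sm q := by rw [ha]; exact hle
    nlinarith
  -- `(2 - q) * 8 ≤ 1` would follow, against `q ≤ 1.85`
  have h6 : sm q = 1 / (q - 1) := rfl
  rw [h6] at h5
  have h7 : 0 < q - 1 := by linarith
  field_simp at h5
  nlinarith

/-- All digits of `W_k`, and all digits of `C_{k+1}`, are forced in front of a tail whose value
lies strictly between `1/(q-1) - 1` and that of the Thue–Morse tail `τ_{2^k+1} τ_{2^k+2} ⋯`. -/
lemma good_W (hlo : 1.5 ≤ q) (hhi : q ≤ 1.85) (h1 : val q tmB = 1) (k : ℕ) :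
    (∀ y, sm q - 1 < y → y < tt q k → Good q (W k) y) ∧
    ∀ y, sm q - 1 < y → y < tt q k → Good q (C (k + 1)) y := by
  have hq : 1 < q := by linarith
  have hb0 := sm_sub_pos hq hhi
  have hC : ∀ k, (∀ y, sm q - 1 < y → y < tt q k → Good q (W k) y) →
      ∀ y, sm q - 1 < y → y < tt q k → Good q (C (k + 1)) y := by
    intro k hW y hy hyt
    rw [C_succ, good_append]
    refine ⟨?_, hW y hy hyt⟩
    set r := ev q (W k) y with hr
    have hr1 : r < 1 := by
      rw [← ev_W_tt hq h1 k]; exact (ev_lt_iff hq _).2 hyt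
    have hr2 : sm q - tt q k < r := by
      rw [tt_eq hq h1 k, ← ev_comp hq, hr, ev_W_eq hq]
      apply (ev_lt_iff hq _).2
      have := lt_tt hq hhi h1 (k + 1)
      linarith
    have := (good_comp hq (W k) (sm q - r)).2 (hW _ (by linarith) (by linarith))
    rwa [sub_sub_cancel] at this
  have hW : ∀ k, ∀ y, sm q - 1 < y → y < tt q k → Good q (W k) y := by
    intro k
    induction k using Nat.strong_induction_on with
    | _ k ih =>
    intro y hy hyt
    rcases k with _ | k
    · simpa [W, WC, Good, Forced, ev] using hy
    rw [W_succ, good_append]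
    constructor
    · apply ih k (by omega)
      · exact lt_ev_C hq hhi h1 k (by linarith)
      · rw [tt_eq hq h1 k]; exact (ev_lt_iff hq _).2 hyt
    · rcases k with _ | k
      · simpa [C, WC, Good, Forced, ev] using hy
      -- `C_{k+1}` only needs the weaker bound `y < t_k`, which follows from `t_{k+2} < t_k`
      exact hC k (ih k (by omega)) y hy (hyt.trans (tt_add_two_lt hlo hhi h1 k))
  exact ⟨hW k, hC k (hW k)⟩

/-- Numerical bounds on the Komornik–Loreti constant, from the digits `τ_1 ⋯ τ_8`. -/
lemma KL_bounds (hq : 1 < q) (h1 : val q tmB = 1) : 1.5 ≤ q ∧ q ≤ 1.85 := by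
  have h2 := ev_W_tt hq h1 2
  have h0 : 0 ≤ tt q 3 := val_nonneg hq _
  have h3 : tt q 3 ≤ sm q := val_le hq _
  have h4 := tt_eq hq h1 2
  rw [h4] at h2
  rw [← ev_append] at h2
  have hw : W 2 ++ C 2 = [true, true, false, true, false, false, true, true] := rfl
  rw [hw] at h2
  constructor
  · by_contra hcon
    push Not at hcon
    have := ev_anti hq hcon.le [true, true, false, true, false, false, true, true] le_rfl h0
    rw [h2] at this
    norm_num [ev] at this
  · by_contra hcon
    push Not at hcon
    have := ev_anti (by norm_num) hcon.le [true, true, false, true, false, false, true, true] h0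
      (h3.trans (sm_lt (by norm_num) hcon).le)
    rw [h2] at this
    norm_num [ev, sm] at this

end KL

/-! ### The family of sequences `1 C_{a_0} C_{a_1} ⋯` -/

/-- The prefix `1 C_{a_0} ⋯ C_{a_{i-1}}`. -/
def P (a : ℕ → ℕ) : ℕ → List Bool
  | 0 => [true]
  | i + 1 => P a i ++ C (a i)

/-- The infinite sequence `1 C_{a_0} C_{a_1} ⋯`. Its digit with index `n` is read off the prefix
`P a n`, which is longer than `n` because no block is empty. -/
def dd (a : ℕ → ℕ) : ℕ → Bool := fun n => (P a n).getD n false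

/-- The length of the prefix `1 C_{a_0} ⋯ C_{a_{i-1}}`. -/
def J (a : ℕ → ℕ) (i : ℕ) : ℕ := (P a i).length

/-- The value in base `q` of the tail `C_{a_i} C_{a_{i+1}} ⋯`. -/
def yy (q : ℝ) (a : ℕ → ℕ) (i : ℕ) : ℝ := val q (tl (dd a) (J a i))

lemma J_succ (a : ℕ → ℕ) (i : ℕ) : J a (i + 1) = J a i + 2 ^ a i := by
  simp [J, P, (length_WC (a i)).2]

lemma lt_J (a : ℕ → ℕ) (i : ℕ) : i < J a i := by
  induction i with
  | zero => simp [J, P]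
  | succ i ih => rw [J_succ]; have : 0 < 2 ^ a i := by positivity
                 omega

lemma P_extends (a : ℕ → ℕ) {i j : ℕ} (h : i ≤ j) : ∃ X, P a j = P a i ++ X := by
  induction j, h using Nat.le_induction with
  | base => exact ⟨[], by simp⟩
  | succ j _ ih =>
    obtain ⟨X, hX⟩ := ih
    exact ⟨X ++ C (a j), by rw [P, hX, List.append_assoc]⟩

lemma dd_eq (a : ℕ → ℕ) {i n : ℕ} (h : n < J a i) : dd a n = (P a i).getD n false := by
  unfold dd
  rcases le_total i n with hin | hin
  · obtain ⟨X, hX⟩ := P_extends a hin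
    rw [hX, List.getD_append _ _ _ _ h]
  · obtain ⟨X, hX⟩ := P_extends a hin
    rw [hX, List.getD_append _ _ _ _ (lt_J a n)]

lemma pre_dd (a : ℕ → ℕ) (i : ℕ) : pre (dd a) (J a i) = P a i := by
  apply List.ext_getElem
  · simp [J]
  · intro n h1 h2
    have h3 := dd_eq a h2
    simp only [pre, List.getElem_map, List.getElem_range]
    rw [h3, List.getD_eq_getElem _ _ h2]

lemma pre_tl_dd (a : ℕ → ℕ) (i : ℕ) : pre (tl (dd a) (J a i)) (2 ^ a i) = C (a i) := by
  have h := pre_dd a (i + 1)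
  rw [J_succ, pre_add, pre_dd, P] at h
  exact List.append_cancel_left h

lemma dd_last (a : ℕ → ℕ) (i : ℕ) : dd a (J a i - 1) = true := by
  have h0 := lt_J a i
  have hP : ∃ Z, P a i = Z ++ [true] := by
    cases i with
    | zero => exact ⟨[], rfl⟩
    | succ i =>
      obtain ⟨Z, hZ⟩ := (WC_last (a i)).2
      exact ⟨P a i ++ Z, by rw [P, hZ, List.append_assoc]⟩
  obtain ⟨Z, hZ⟩ := hP
  have hJ : J a i = Z.length + 1 := by rw [J, hZ]; simp
  rw [dd_eq a (show J a i - 1 < J a i by omega), hZ, hJ]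
  simp

lemma P_congr {a c : ℕ → ℕ} {j : ℕ} (h : ∀ i < j, a i = c i) : P a j = P c j := by
  induction j with
  | zero => rfl
  | succ j ih => rw [P, P, ih fun i hi => h i (by omega), h j (by omega)]

/-- Index sequences which start at `K` or later and have gaps at least `2`. -/
def Adm (K : ℕ) (a : ℕ → ℕ) : Prop := K ≤ a 0 ∧ ∀ i, a i + 2 ≤ a (i + 1)

lemma Adm.le {K : ℕ} {a : ℕ → ℕ} (h : Adm K a) (i : ℕ) : K ≤ a i := by
  induction i with
  | zero => exact h.1
  | succ i ih => have := h.2 i; omega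

/-- The gaps make each block `C_{a_i}` at least twice as long as all that precedes it. -/
lemma J_le {K : ℕ} {a : ℕ → ℕ} (hK : 1 ≤ K) (h : Adm K a) (i : ℕ) : 2 * J a i ≤ 2 ^ a i := by
  induction i with
  | zero =>
    have := h.le 0
    have : 2 ^ 1 ≤ 2 ^ a 0 := Nat.pow_le_pow_right (by norm_num) (by omega)
    simpa [J, P] using this
  | succ i ih =>
    rw [J_succ]
    have : 2 ^ (a i + 2) ≤ 2 ^ a (i + 1) := Nat.pow_le_pow_right (by norm_num) (h.2 i)
    rw [pow_add] at this
    omega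

/-- The Komornik–Loreti base `q` together with a starting index `K` large enough for the
estimates below. -/
structure Setup (q : ℝ) (K : ℕ) : Prop where
  lo : 1.5 ≤ q
  hi : q ≤ 1.85
  one : val q tmB = 1
  K1 : 1 ≤ K
  big : 32 * sm q ≤ (sm q - 1) * q ^ K

section Family

variable {q : ℝ} {K : ℕ}

lemma Setup.gt (S : Setup q K) : 1 < q := by linarith [S.lo]

lemma yy_eq (S : Setup q K) (a : ℕ → ℕ) (i : ℕ) :
    yy q a i = ev q (C (a i)) (yy q a (i + 1)) := by
  unfold yy
  rw [val_pre S.gt _ (2 ^ a i), pre_tl_dd, tl_tl, J_succ]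

lemma val_dd (S : Setup q K) (a : ℕ → ℕ) (i : ℕ) :
    val q (dd a) = ev q (P a i) (yy q a i) := by
  rw [val_pre S.gt _ (J a i), pre_dd, yy]

lemma lt_yy (S : Setup q K) (a : ℕ → ℕ) (i : ℕ) : sm q - 1 < yy q a i := by
  rw [yy_eq S]; exact lt_ev_C S.gt S.hi S.one _ (val_nonneg S.gt _)

/-- The excess of the tail over `1/(q-1) - 1` is of order `q^{-2^{a_i}}`. -/
lemma yy_sub (S : Setup q K) (a : ℕ → ℕ) (i : ℕ) :
    (sm q - 1) / q ^ (2 ^ a i) < yy q a i - (sm q - 1) ∧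
      yy q a i - (sm q - 1) ≤ 2 * sm q / q ^ (2 ^ a i) := by
  have hq := S.gt
  have hb := sm_sub_pos hq S.hi
  rw [yy_eq S, ev_C_sub hq S.one]
  have h1 := lt_yy S a (i + 1)
  have h2 := lt_tt hq S.hi S.one (a i)
  have h3 : yy q a (i + 1) ≤ sm q := val_le hq _
  have h4 : tt q (a i) ≤ sm q := val_le hq _
  constructor
  · gcongr; linarith
  · gcongr; linarith

lemma big_of_le (S : Setup q K) {n : ℕ} (hn : K ≤ n) : 32 * sm q ≤ (sm q - 1) * q ^ n := by
  have := sm_sub_pos S.gt S.hi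
  have h : q ^ K ≤ q ^ n := pow_le_pow_right₀ S.gt.le hn
  exact S.big.trans (by gcongr)

lemma cmp_lt (S : Setup q K) {k m : ℕ} (hm : K ≤ m) (hk : k < m) :
    2 * sm q / q ^ (2 ^ m) < (sm q - 1) / q ^ (2 ^ k) := by
  have hq := S.gt
  have hs := sm_pos hq
  have hb := sm_sub_pos hq S.hi
  obtain ⟨l, rfl⟩ : ∃ l, m = l + 1 := ⟨m - 1, by omega⟩
  have h1 : 2 ^ k ≤ 2 ^ l := Nat.pow_le_pow_right (by norm_num) (by omega)
  have h2 : l < 2 ^ l := Nat.lt_two_pow_self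
  obtain ⟨n, hn, hKn⟩ : ∃ n, 2 ^ (l + 1) = n + 2 ^ k ∧ K ≤ n :=
    ⟨2 ^ (l + 1) - 2 ^ k, by rw [pow_succ]; omega, by rw [pow_succ]; omega⟩
  have h3 := big_of_le S hKn
  rw [div_lt_div_iff₀ (by positivity) (by positivity), hn, pow_add, ← mul_assoc]
  have : 0 < q ^ (2 ^ k) := by positivity
  exact mul_lt_mul_of_pos_right (by linarith) this

lemma yy_lt_tt (S : Setup q K) {a : ℕ → ℕ} (ha : Adm K a) (i : ℕ) {k : ℕ} (hk : k < a i) :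
    yy q a i < tt q k := by
  have hq := S.gt
  have h1 := (yy_sub S a i).2
  have h2 := cmp_lt S (ha.le i) hk
  have h3 : (sm q - 1) / q ^ (2 ^ k) ≤ tt q k - (sm q - 1) := by
    rw [div_le_iff₀ (by positivity)]
    have h4 := tt_sub hq S.one k
    have h5 := lt_tt hq S.hi S.one (k + 1)
    have h6 := lt_tt hq S.hi S.one k
    nlinarith
  linarith

/-- All digits of `1 C_{a_0} C_{a_1} ⋯` are forced in base `q`: this holds block by block, as the
tail behind `C_{a_i}` lies between `1/(q-1) - 1` and the Thue–Morse tail at `2^{a_i - 1}`. -/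
lemma univ_dd (S : Setup q K) {a : ℕ → ℕ} (ha : Adm K a) : Univ q (dd a) := by
  have hq := S.gt
  have hgood : ∀ i, Good q (P a i) (yy q a i) := by
    intro i
    induction i with
    | zero => simpa [P, Good, Forced, ev] using lt_yy S a 0
    | succ i ih =>
      rw [P, good_append, ← yy_eq S]
      refine ⟨ih, ?_⟩
      have h1 := ha.le i
      have h2 := S.K1
      have h3 := ha.2 i
      obtain ⟨k, hk⟩ : ∃ k, a i = k + 1 := ⟨a i - 1, by omega⟩
      rw [hk]
      exact (good_W S.lo S.hi S.one k).2 _ (lt_yy S a _) (yy_lt_tt S ha _ (by omega))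
  intro n
  have h := hgood n
  rw [← pre_dd, yy, good_pre hq] at h
  exact h n (lt_J a n)

/-- Sequences with a larger index at the first difference have smaller values. -/
lemma val_dd_lt (S : Setup q K) {a c : ℕ → ℕ} (hc : Adm K c) {j : ℕ}
    (h : ∀ i < j, a i = c i) (hj : a j < c j) : val q (dd c) < val q (dd a) := by
  rw [val_dd S a j, val_dd S c j, P_congr h]
  apply (ev_lt_iff S.gt _).2
  have h1 := (yy_sub S a j).1
  have h2 := (yy_sub S c j).2
  have h3 := cmp_lt S (hc.le j) hj
  linarith

lemma abs_val_dd_sub_le (S : Setup q K) {a c : ℕ → ℕ} {j : ℕ} (h : ∀ i < j, a i = c i) :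
    |val q (dd a) - val q (dd c)| ≤ sm q * (1 / q) ^ j := by
  have hq := S.gt
  have hs := sm_pos hq
  have hpos : 0 < q ^ (P c j).length := by positivity
  rw [val_dd S a j, val_dd S c j, P_congr h, ev_sub hq, abs_div, abs_of_pos hpos,
    one_div_pow, mul_one_div]
  have hJ : j ≤ (P c j).length := (lt_J c j).le
  have h1 : 0 ≤ yy q a j := val_nonneg hq _
  have h2 : yy q a j ≤ sm q := val_le hq _
  have h3 : 0 ≤ yy q c j := val_nonneg hq _
  have h4 : yy q c j ≤ sm q := val_le hq _
  apply div_le_div₀ hs.le _ (by positivity) (pow_le_pow_right₀ hq.le hJ)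
  rw [abs_le]; constructor <;> linarith

/-! ### No smaller base gives a unique expansion -/

/-- A base in which some non-constant sequence has only forced digits exceeds the golden ratio:
below it, a digit change `01` or `10` is incompatible with both digits being forced. -/
lemma golden_of_univ {r : ℝ} (hr : 1 < r) {e : ℕ → Bool} (he : Univ r e)
    (h0 : 0 < val r e) (h1 : val r e < sm r) : 0 < r ^ 2 - r - 1 := by
  obtain ⟨n, hn⟩ : ∃ n, e n ≠ e (n + 1) := by
    by_contra hcon
    push Not at hcon
    have hconst : ∀ n, e n = e 0 := fun n => by
      induction n with
      | zero => rfl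
      | succ n ih => rw [← hcon, ih]
    cases hb : e 0 with
    | false => simp [val, hconst, hb] at h0
    | true =>
      have : val r e = sm r := by
        rw [← (hasSum_one hr).tsum_eq]; simp [val, hconst, hb]
      linarith
  have h2 := he n
  have h3 := he (n + 1)
  have h4 := val_succ hr (tl e (n + 1))
  rw [tl_tl, show tl e (n + 1) 0 = e (n + 1) from rfl, eq_div_iff (by linarith)] at h4
  have hs := sm_eq hr
  have hr1 : 0 < r - 1 := by linarith
  have hs' : sm r * (r - 1) = 1 := by linarith
  set v := val r (tl e (n + 1))
  set w := val r (tl e (n + 1 + 1))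
  cases h5 : e n <;> cases h6 : e (n + 1) <;> rw [h5] at h2 hn <;> rw [h6] at h3 h4 hn <;>
    simp only [Forced, dg_true, dg_false] at h2 h3 h4
  · exact absurd rfl hn
  · nlinarith
  · nlinarith
  · exact absurd rfl hn

/-- If the prefix `1 C_{a_0} ⋯ C_{a_i}` already exceeds `val q (dd a)` in a smaller base `r`, then
`r` is so far from `q` that `C_{a_i}` has value at most `1/(r-1) - 1` in base `r`. -/
lemma ev_C_le (S : Setup q K) {a : ℕ → ℕ} (ha : Adm K a) {r : ℝ} (hr : 1.5 ≤ r) (hrq : r < q)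
    (i : ℕ) (hx : val q (dd a) < ev r (P a (i + 1)) 0) : ev r (C (a i)) 0 ≤ sm r - 1 := by
  have hq := S.gt
  have hr1 : 1 < r := by linarith
  by_contra hcon
  push Not at hcon
  have hs := sm_pos hq
  have hsr := sm_pos hr1
  have hsm := sm_lt hr1 hrq
  have hb := sm_sub_pos hq S.hi
  have hK := S.K1
  obtain ⟨k, hk⟩ : ∃ k, a i = k + 1 := ⟨a i - 1, by have := ha.le i; omega⟩
  -- upper bound for `q - r`, since `C_{a_i}` has value almost `1/(q-1) - 1` in base `q`
  have hup : 1 / r - 1 / q < 2 * sm q / q ^ (2 * 2 ^ a i) := by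
    obtain ⟨Z, hZ⟩ := W_head k
    have hC : comp (C (a i)) = true :: (Z ++ comp (W k)) := by
      rw [hk, C_succ, comp_append, comp_comp, hZ]; rfl
    have h1 := ev_comp hr1 (C (a i)) 0
    have h2 := ev_comp hq (C (a i)) 0
    rw [sub_zero, hC] at h1 h2
    simp only [ev, dg_true] at h1 h2
    have h3 := ev_anti hr1 hrq.le (Z ++ comp (W k)) hs.le hsm.le
    have h4 := ev_nonneg hq (Z ++ comp (W k)) hs.le
    set u := ev r (Z ++ comp (W k)) (sm r)
    set v := ev q (Z ++ comp (W k)) (sm q)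
    have h5 : v / q ≤ u / r := div_le_div₀ (by linarith) h3 (by linarith) hrq.le
    have h6 := ev_C_sub hq S.one (a i) 0
    have h7 := ev_C_sub hq S.one (a i) (tt q (a i + 1))
    rw [← tt_eq hq S.one] at h7
    have h8 : tt q (a i) ≤ sm q := val_le hq _
    have h9 : tt q (a i + 1) ≤ sm q := val_le hq _
    have h10 : (0 + (tt q (a i) - (sm q - 1))) / q ^ (2 ^ a i)
        ≤ 2 * sm q / q ^ (2 * 2 ^ a i) := by
      rw [zero_add, h7, div_div, ← pow_add, ← two_mul]
      gcongr
      linarith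
    rw [add_div] at h1 h2
    linarith
  -- lower bound for `q - r`, since the value of a word is Lipschitz in the base
  have hlow : (sm q - 1) / q ^ J a (i + 1) < sm r - sm q := by
    have h1 := ev_comp hr1 (P a (i + 1)) 0
    have h2 := ev_comp hq (P a (i + 1)) 0
    rw [sub_zero] at h1 h2
    have h3 := ev_anti hr1 hrq.le (comp (P a (i + 1))) hs.le hsm.le
    have h4 := ev_sub hq (P a (i + 1)) (yy q a (i + 1)) 0
    rw [← val_dd S, sub_zero] at h4
    have h5 : (sm q - 1) / q ^ J a (i + 1) ≤ yy q a (i + 1) / q ^ (P a (i + 1)).length := by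
      unfold J
      have := lt_yy S a (i + 1)
      gcongr
    linarith
  have hlip : sm r - sm q ≤ 4 * (q - r) := by
    have h1 : sm r - sm q = (q - r) / ((r - 1) * (q - 1)) := by
      have : r - 1 ≠ 0 := by linarith
      have : q - 1 ≠ 0 := by linarith
      unfold sm; field_simp; ring
    rw [h1, div_le_iff₀ (by nlinarith)]
    have := S.lo
    have : 1 ≤ 4 * ((r - 1) * (q - 1)) := by nlinarith
    nlinarith
  have hinv : q - r ≤ 4 * (1 / r - 1 / q) := by
    have h1 : 1 / r - 1 / q = (q - r) / (r * q) := by field_simp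
    rw [h1, mul_div_assoc', le_div_iff₀ (by positivity)]
    have := S.hi
    have : r * q ≤ 4 := by nlinarith
    nlinarith
  have hfin : (sm q - 1) / q ^ J a (i + 1) < 32 * sm q / q ^ (2 * 2 ^ a i) := by
    have : 32 * sm q / q ^ (2 * 2 ^ a i) = 16 * (2 * sm q / q ^ (2 * 2 ^ a i)) := by ring
    linarith
  -- the exponents differ by `2^{a_i} - J_i ≥ J_i`, and by at least `K`
  have hJ := J_le S.K1 ha i
  have hlt : k < 2 ^ k := Nat.lt_two_pow_self
  have ha_le := ha.le i
  obtain ⟨n, hn, hKn⟩ : ∃ n, 2 * 2 ^ a i = n + J a (i + 1) ∧ K ≤ n := by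
    rw [J_succ]
    have : 2 ^ a i = 2 * 2 ^ k := by rw [hk]; ring
    exact ⟨2 ^ a i - J a i, by omega, by omega⟩
  have h3 := big_of_le S hKn
  rw [div_lt_div_iff₀ (by positivity) (by positivity), hn, pow_add, ← mul_assoc] at hfin
  have hpos : 0 < q ^ J a (i + 1) := by positivity
  have := lt_of_mul_lt_mul_right hfin hpos.le
  linarith

/-- If `e` is lexicographically smaller than `b` and its digit `0` at the first difference is
forced, then `e` is worth less than any prefix of `b` containing that difference. -/
lemma val_lt_ev_pre {r : ℝ} (hr : 1 < r) {e b : ℕ → Bool} {p n : ℕ} (hpn : p < n)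
    (heq : ∀ i < p, e i = b i) (hep : e p = false) (hbp : b p = true)
    (hf : val r (tl e (p + 1)) < 1) : val r e < ev r (pre b n) 0 := by
  obtain ⟨m, rfl⟩ : ∃ m, n = p + 1 + m := ⟨n - (p + 1), by omega⟩
  rw [val_pre hr e (p + 1), pre_add b (p + 1) m, pre_succ e p, pre_succ b p, pre_congr heq, hep,
    hbp]
  simp only [ev_append]
  apply (ev_lt_iff hr _).2
  have := ev_nonneg hr (pre (tl b (p + 1)) m) le_rfl
  simp only [ev, dg_true, dg_false]
  exact div_lt_div_of_pos_right (by linarith) (by linarith)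

/-- In a base below `q`, the value of `dd a` has no expansion with all digits forced. The
argument looks at the first difference between such an expansion and `dd a`. -/
lemma no_smaller_base (S : Setup q K) {a : ℕ → ℕ} (ha : Adm K a) {r : ℝ} (hr : 1 < r)
    (hrq : r < q) {e : ℕ → Bool} (he : Univ r e) (hx : val q (dd a) = val r e) : False := by
  have hq := S.gt
  have hs := sm_eq hq
  have hd0 : dd a 0 = true := rfl
  -- the sequences differ, as `val` is strictly decreasing in the base
  have hne : e ≠ dd a := by
    rintro rfl
    exact (val_lt hr hrq hd0).ne hx
  have hxlow : sm q / q ≤ val q (dd a) := by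
    rw [val_dd S a 0]
    have := lt_yy S a 0
    simp only [P, ev, dg_true]
    gcongr; linarith
  have hgold : 0 < r ^ 2 - r - 1 := by
    apply golden_of_univ hr he
    · rw [← hx]; exact lt_of_lt_of_le (div_pos (sm_pos hq) (by linarith)) hxlow
    · rw [← hx]; exact (val_le hq _).trans_lt (sm_lt hr hrq)
  have hr15 : 1.6 ≤ r := by nlinarith
  obtain ⟨p, hp, hlt⟩ := exists_first_diff hne
  cases hep : e p with
  | true =>
    -- then `e` exceeds `dd a` in base `q`, yet its value in base `q` is smaller than in base `r`
    have hdp : dd a p = false := by rw [hep] at hp; cases h : dd a p <;> simp_all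
    have h1 := val_lt_ev_pre hq (Nat.lt_succ_self p) (fun i hi => (hlt i hi).symm) hdp hep
      (by have := univ_dd S ha p; rwa [hdp] at this)
    have h2 : ev q (pre e (p + 1)) 0 ≤ val q e := by
      rw [val_pre hq e (p + 1)]
      exact (ev_le_iff hq _).2 (val_nonneg hq _)
    have h3 := val_anti hr hrq.le e
    linarith
  | false =>
    have hdp : dd a p = true := by rw [hep] at hp; cases h : dd a p <;> simp_all
    have hf : val r (tl e (p + 1)) < 1 := by have := he p; rwa [hep] at this
    by_cases hp0 : p = 0
    · subst hp0
      have h1 := val_succ hr e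
      rw [hep, dg_false, zero_add] at h1
      have h2 : val r e < 1 / r := by rw [h1]; gcongr
      have h3 : sm q / q = 1 / (q * (q - 1)) := by
        have : q - 1 ≠ 0 := by linarith
        unfold sm; field_simp
      have h4 : 1 / (q * (q - 1)) < 1 / r := by rw [← h3]; linarith
      have h5 : r < q * (q - 1) := by
        rwa [one_div_lt_one_div (by nlinarith) (by linarith)] at h4
      have := S.hi
      have := S.lo
      nlinarith
    · -- locate the block `C_{a_i}` in which the first difference occurs
      obtain ⟨i, hi1, hi2⟩ : ∃ i, J a i ≤ p ∧ p < J a (i + 1) := by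
        classical
        have hex : ∃ i, p < J a i := ⟨p, lt_J a p⟩
        have hspec := Nat.find_spec hex
        have hmin := fun m => Nat.find_min hex (m := m)
        obtain ⟨i, hi⟩ : ∃ i, Nat.find hex = i + 1 := by
          refine Nat.exists_eq_succ_of_ne_zero fun h0 => ?_
          rw [h0] at hspec
          simp [J, P] at hspec
          exact hp0 hspec
        rw [hi] at hspec
        exact ⟨i, not_lt.1 (hmin i (by omega)), hspec⟩
      have hC := ev_C_le S ha (by linarith) hrq i (by
        rw [hx, ← pre_dd]
        exact val_lt_ev_pre hr hi2 hlt hep hdp hf)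
      -- the last digit before that block is a forced `1`
      have hJ := lt_J a i
      have hT := he (J a i - 1)
      rw [hlt _ (by omega), dd_last, Nat.sub_add_cancel (by omega)] at hT
      have hlt2 : val r (tl e (J a i)) < ev r (pre (tl (dd a) (J a i)) (2 ^ a i)) 0 := by
        rw [J_succ] at hi2
        apply val_lt_ev_pre hr (p := p - J a i) (by omega)
        · intro m hm; exact hlt _ (by omega)
        · simpa [tl, Nat.add_sub_cancel' hi1] using hep
        · simpa [tl, Nat.add_sub_cancel' hi1] using hdp
        · rw [tl_tl, ← add_assoc, Nat.add_sub_cancel' hi1]; exact hf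
      rw [pre_tl_dd] at hlt2
      simp only [Forced] at hT
      linarith

lemma mem_levelSet (S : Setup q K) {a : ℕ → ℕ} (ha : Adm K a) :
    val q (dd a) ∈ levelSet q := by
  have hq := S.gt
  refine ⟨?_, IsLeast.csInf_eq ⟨?_, ?_⟩⟩
  · have := lt_yy S a 0
    have := sm_sub_pos hq S.hi
    rw [val_dd S a 0]
    simp only [P, ev, dg_true]
    apply div_pos <;> linarith
  · exact mem_univSet_iff.2 ⟨⟨hq, by linarith [S.hi]⟩, dd a, rfl, univ_dd S ha⟩
  · intro r hr
    obtain ⟨⟨hr1, _⟩, e, hx, he⟩ := mem_univSet_iff.1 hr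
    by_contra hcon
    push Not at hcon
    exact no_smaller_base S ha hr1 hcon he hx

/-! ### Accumulation points -/

/-- The index sequences `K + 4 + m, K + 8 + m, …`, with gaps large enough that changing one
entry by one keeps them admissible. -/
def aa (K m : ℕ) : ℕ → ℕ := fun i => K + m + 4 * (i + 1)

lemma adm_update {K m j v : ℕ} (h1 : aa K m j ≤ v + 1) (h2 : v ≤ aa K m j + 1) :
    Adm K (Function.update (aa K m) j v) := by
  unfold aa at h1 h2
  constructor
  · by_cases h : 0 = j
    · subst h; simp; omega
    · rw [Function.update_of_ne h]; unfold aa; omega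
  · intro i
    by_cases h : i = j <;> by_cases h' : i + 1 = j
    · omega
    · subst h; rw [Function.update_self, Function.update_of_ne h']; unfold aa; omega
    · subst h'; rw [Function.update_self, Function.update_of_ne h]; unfold aa; omega
    · rw [Function.update_of_ne h, Function.update_of_ne h']; unfold aa; omega

lemma adm_aa (K m : ℕ) : Adm K (aa K m) :=
  ⟨by unfold aa; omega, fun i => by unfold aa; omega⟩

lemma aa_injective (S : Setup q K) : Function.Injective fun m => val q (dd (aa K m)) := by
  apply StrictAnti.injective
  intro m n hmn
  exact val_dd_lt S (adm_aa K n) (j := 0) (fun i hi => by omega) (by unfold aa; omega)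

lemma tendsto_update (S : Setup q K) (m : ℕ) (v : ℕ → ℕ) :
    Filter.Tendsto (fun j => val q (dd (Function.update (aa K m) j (v j)))) Filter.atTop
      (nhds (val q (dd (aa K m)))) := by
  have hq := S.gt
  have hlim : Filter.Tendsto (fun n : ℕ => sm q * (1 / q) ^ n) Filter.atTop (nhds 0) := by
    simpa using (tendsto_pow_atTop_nhds_zero_of_lt_one (r := 1 / q) (by positivity)
      ((div_lt_one (by linarith)).2 hq)).const_mul (sm q)
  rw [tendsto_iff_dist_tendsto_zero]
  refine squeeze_zero (fun _ => dist_nonneg) (fun j => ?_) hlim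
  rw [Real.dist_eq]
  exact abs_val_dd_sub_le S fun i hi => Function.update_of_ne hi.ne _ _

lemma right_acc (S : Setup q K) (m : ℕ) : ∃ u : ℕ → ℝ, (∀ j, u j ∈ levelSet q) ∧
    StrictAnti u ∧ Filter.Tendsto u Filter.atTop (nhds (val q (dd (aa K m)))) := by
  set f : ℕ → ℝ := fun j => val q (dd (Function.update (aa K m) j (aa K m j - 1))) with hf
  have hlim : Filter.Tendsto f Filter.atTop _ := tendsto_update S m fun j => aa K m j - 1
  have hgt : ∀ j, val q (dd (aa K m)) < f j := fun j =>
    val_dd_lt S (adm_aa K m) (j := j) (fun i hi => Function.update_of_ne hi.ne _ _)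
      (by rw [Function.update_self]; unfold aa; omega)
  have hglb : IsGLB (Set.range f) (val q (dd (aa K m))) :=
    isGLB_of_mem_closure (by rintro _ ⟨j, rfl⟩; exact (hgt j).le)
      (mem_closure_of_tendsto hlim (Filter.Eventually.of_forall fun j => ⟨j, rfl⟩))
  obtain ⟨u, hu1, -, hu3, hu4⟩ := hglb.exists_seq_strictAnti_tendsto_of_notMem
    (by rintro ⟨j, hj⟩; exact (hgt j).ne' hj) (Set.range_nonempty f)
  refine ⟨u, fun n => ?_, hu1, hu3⟩
  obtain ⟨j, hj⟩ := hu4 n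
  rw [← hj]
  exact mem_levelSet S (adm_update (by omega) (by omega))

lemma left_acc (S : Setup q K) (m : ℕ) : ∃ u : ℕ → ℝ, (∀ j, u j ∈ levelSet q) ∧
    StrictMono u ∧ Filter.Tendsto u Filter.atTop (nhds (val q (dd (aa K m)))) := by
  set f : ℕ → ℝ := fun j => val q (dd (Function.update (aa K m) j (aa K m j + 1))) with hf
  have hlim : Filter.Tendsto f Filter.atTop _ := tendsto_update S m fun j => aa K m j + 1
  have hadm : ∀ j, Adm K (Function.update (aa K m) j (aa K m j + 1)) := fun j =>
    adm_update (by omega) (by omega)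
  have hlt : ∀ j, f j < val q (dd (aa K m)) := fun j =>
    val_dd_lt S (hadm j) (j := j) (fun i hi => (Function.update_of_ne hi.ne _ _).symm)
      (by rw [Function.update_self]; omega)
  have hlub : IsLUB (Set.range f) (val q (dd (aa K m))) :=
    isLUB_of_mem_closure (by rintro _ ⟨j, rfl⟩; exact (hlt j).le)
      (mem_closure_of_tendsto hlim (Filter.Eventually.of_forall fun j => ⟨j, rfl⟩))
  obtain ⟨u, hu1, -, hu3, hu4⟩ := hlub.exists_seq_strictMono_tendsto_of_notMem
    (by rintro ⟨j, hj⟩; exact (hlt j).ne hj) (Set.range_nonempty f)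
  refine ⟨u, fun n => ?_, hu1, hu3⟩
  obtain ⟨j, hj⟩ := hu4 n
  rw [← hj]
  exact mem_levelSet S (hadm j)

lemma exists_setup {q : ℝ} (hq : 1 < q)
    (hsum : ∑' i : ℕ, (tm (i + 1) : ℝ) / q ^ (i + 1) = 1) : ∃ K, Setup q K := by
  have h1 : val q tmB = 1 := by
    rw [← hsum]
    unfold val
    congr 1; funext i
    congr 1
    rcases Nat.le_one_iff_eq_zero_or_eq_one.1 (tm_le_one (i + 1)) with h | h <;>
      simp [tmB, h]
  obtain ⟨hlo, hhi⟩ := KL_bounds hq h1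
  have hb := sm_sub_pos hq hhi
  obtain ⟨n, hn⟩ := pow_unbounded_of_one_lt (32 * sm q / (sm q - 1)) hq
  refine ⟨n + 1, hlo, hhi, h1, by omega, ?_⟩
  rw [div_lt_iff₀ hb] at hn
  have : q ^ n ≤ q ^ (n + 1) := pow_le_pow_right₀ hq.le (by omega)
  nlinarith

end Family

end QKL

/-- the level set `L(q_KL)` has infinitely many right
accumulation points belonging to `L(q_KL)`, and infinitely many left
accumulation points belonging to `L(q_KL)`. -/
theorem levelSet_qKL_accumulation (qKL : ℝ) (hKL : qKL ∈ Set.Ioo (1 : ℝ) 2)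
    (hKLsum : ∑' i : ℕ, (tm (i + 1) : ℝ) / qKL ^ (i + 1) = 1) :
    {x : ℝ | x ∈ levelSet qKL ∧ ∃ u : ℕ → ℝ, (∀ j, u j ∈ levelSet qKL) ∧
        StrictAnti u ∧ Filter.Tendsto u Filter.atTop (nhds x)}.Infinite ∧
    {x : ℝ | x ∈ levelSet qKL ∧ ∃ u : ℕ → ℝ, (∀ j, u j ∈ levelSet qKL) ∧
        StrictMono u ∧ Filter.Tendsto u Filter.atTop (nhds x)}.Infinite := by
  obtain ⟨K, S⟩ := QKL.exists_setup hKL.1 hKLsum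
  exact ⟨Set.infinite_of_injective_forall_mem (QKL.aa_injective S) fun m =>
      ⟨QKL.mem_levelSet S (QKL.adm_aa K m), QKL.right_acc S m⟩,
    Set.infinite_of_injective_forall_mem (QKL.aa_injective S) fun m =>
      ⟨QKL.mem_levelSet S (QKL.adm_aa K m), QKL.left_acc S m⟩⟩
end
end
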